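/- Let γ ∈ ℝ \ {0}. There exist λ > 0, M > 0 and ε₀ > 0 such that for every 0 < ε ≤ ε₀ there exists a real-analytic steady solution Ψ_ε of the Euler equations on the γ-rotating sphere with ‖γY₁⁰ − Ψ_ε‖_{G_λ} ≤ Mε, such that Ψ_ε is non-zonal and non-trivial; in particular ⟨Ψ_ε, Y₄²⟩ ≠ 0, so Ψ_ε is not of the form (zonal function) + (element of span{Y₂^m : |m| ≤ 2}). -/

import Mathlib

open MeasureTheory
open scoped ENNReal

noncomputable section

/-- Functions on the unit sphere, represented in colatitude-longitude coordinates `(θ, φ)`. -/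
abbrev SphereFun : Type := ℝ → ℝ → ℝ

/-- The `L²` inner product on the sphere:
`⟨u,v⟩ = ∫₀^{2π} ∫₀^π u v sin θ dθ dφ`. -/
def sInner (u v : SphereFun) : ℝ :=
  ∫ φ in (0:ℝ)..(2*Real.pi), ∫ θ in (0:ℝ)..Real.pi, u θ φ * v θ φ * Real.sin θ

/-- Legendre polynomials via Rodrigues' formula. -/
def legP (n : ℕ) (s : ℝ) : ℝ :=
  (1 / ((2:ℝ)^n * (Nat.factorial n : ℝ))) * iteratedDeriv n (fun x : ℝ => (x^2 - 1)^n) s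

/-- Associated Legendre functions `P_n^m`. -/
def assocLegP (n m : ℕ) (s : ℝ) : ℝ :=
  (-1 : ℝ)^m * (1 - s^2) ^ ((m : ℝ)/2) * iteratedDeriv m (legP n) s

/-- Real spherical harmonics `Y_n^m`. -/
def Ynm (n : ℕ) (m : ℤ) : SphereFun := fun θ φ =>
  if m = 0 then
    Real.sqrt ((2*(n:ℝ)+1)/(4*Real.pi)) * legP n (Real.cos θ)
  else if 0 < m then
    (-1 : ℝ)^(m.natAbs) * Real.sqrt 2 *
      Real.sqrt ((2*(n:ℝ)+1)/(4*Real.pi) *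
        ((Nat.factorial (n - m.natAbs) : ℝ) / (Nat.factorial (n + m.natAbs) : ℝ))) *
      assocLegP n m.natAbs (Real.cos θ) * Real.cos ((m.natAbs : ℝ) * φ)
  else
    (-1 : ℝ)^(m.natAbs) * Real.sqrt 2 *
      Real.sqrt ((2*(n:ℝ)+1)/(4*Real.pi) *
        ((Nat.factorial (n - m.natAbs) : ℝ) / (Nat.factorial (n + m.natAbs) : ℝ))) *
      assocLegP n m.natAbs (Real.cos θ) * Real.sin ((m.natAbs : ℝ) * φ)

/-- The spherical-harmonic coefficient `u_n^m = ⟨u, Y_n^m⟩`. -/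
def coeff (u : SphereFun) (n : ℕ) (m : ℤ) : ℝ := sInner u (Ynm n m)

/-- `μ_n = n(n+1) + 1`. -/
def muSp (n : ℕ) : ℝ := (n:ℝ)*((n:ℝ)+1)+1

/-- Squared (inhomogeneous) Sobolev norm `‖u‖²_{H^k} = Σ μ_n^k |u_n^m|²`. -/
def sobNormSq (k : ℕ) (u : SphereFun) : ℝ≥0∞ :=
  ∑' p : ℕ × ℤ, if |p.2| ≤ (p.1 : ℤ) then
    ENNReal.ofReal ((muSp p.1)^k * (coeff u p.1 p.2)^2) else 0

/-- Squared homogeneous Sobolev norm `‖u‖²_{Ḣ^k} = Σ_{n ≥ 1} λ_n^k |u_n^m|²`. -/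
def dotNormSq (k : ℕ) (u : SphereFun) : ℝ≥0∞ :=
  ∑' p : ℕ × ℤ, if 1 ≤ p.1 ∧ |p.2| ≤ (p.1 : ℤ) then
    ENNReal.ofReal (((p.1:ℝ)*((p.1:ℝ)+1))^k * (coeff u p.1 p.2)^2) else 0

/-- Squared Gevrey norm `‖u‖²_{G_λ} = Σ_{n ≥ 1} μ_n² e^{2λ√μ_n} |u_n^m|²`. -/
def gevNormSq (lam : ℝ) (u : SphereFun) : ℝ≥0∞ :=
  ∑' p : ℕ × ℤ, if 1 ≤ p.1 ∧ |p.2| ≤ (p.1 : ℤ) then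
    ENNReal.ofReal ((muSp p.1)^2 * Real.exp (2*lam*Real.sqrt (muSp p.1)) *
      (coeff u p.1 p.2)^2) else 0

/-- `∂_θ`. -/
def dTheta (u : SphereFun) : SphereFun := fun θ φ => deriv (fun t => u t φ) θ

/-- `∂_φ`. -/
def dPhi (u : SphereFun) : SphereFun := fun θ φ => deriv (fun p => u θ p) φ

/-- The Laplace–Beltrami operator in colatitude-longitude coordinates:
`Δu = (1/sinθ)∂_θ(sinθ ∂_θu) + (1/sin²θ)∂²_φu`. -/
def lapS (u : SphereFun) : SphereFun := fun θ φ =>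
  (1 / Real.sin θ) * deriv (fun t => Real.sin t * dTheta u t φ) θ
  + (1 / (Real.sin θ)^2) * dPhi (dPhi u) θ φ

/-- A zonal function: one depending only on the colatitude `θ`. -/
def Zonal (u : SphereFun) : Prop := ∀ (θ φ₁ φ₂ : ℝ), u θ φ₁ = u θ φ₂

/-- Zonal on the coordinate chart `θ ∈ [0, π]`. -/
def ZonalOn (u : SphereFun) : Prop :=
  ∀ θ ∈ Set.Icc (0:ℝ) Real.pi, ∀ (φ₁ φ₂ : ℝ), u θ φ₁ = u θ φ₂

/-- `2π`-periodicity in the longitude. -/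
def PeriodicPhi (u : SphereFun) : Prop := ∀ θ φ, u θ (φ + 2*Real.pi) = u θ φ

/-- The advection term `U·∇f` for the velocity `U = ∇⊥Ψ`, i.e.
`(1/sinθ)∂_φΨ ∂_θf − ∂_θΨ (1/sinθ)∂_φf`. -/
def advect (Ψ f : SphereFun) : SphereFun := fun θ φ =>
  (1 / Real.sin θ) * dPhi Ψ θ φ * dTheta f θ φ
  - dTheta Ψ θ φ * ((1 / Real.sin θ) * dPhi f θ φ)

/-- Smoothness in the coordinates. -/
def SphSmooth (u : SphereFun) : Prop := ContDiff ℝ (⊤ : ℕ∞) (Function.uncurry u)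

/-- A function is trivial if it is a zonal function plus an element of
`span{Y₂^m : |m| ≤ 2}`; non-triviality is the negation of this. -/
def SphNontrivial (u : SphereFun) : Prop :=
  ¬ ∃ (z : SphereFun) (c : ℤ → ℝ), Zonal z ∧
      ∀ θ ∈ Set.Icc (0:ℝ) Real.pi, ∀ φ : ℝ,
        u θ φ = z θ φ + ∑ m ∈ Finset.Icc (-2 : ℤ) 2, c m * Ynm 2 m θ φ

/-- Real analyticity on the sphere, characterized by membership in a Gevrey class. -/
def RealAnalyticSphere (u : SphereFun) : Prop := ∃ lam > 0, gevNormSq lam u < ⊤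

section
set_option linter.unusedSectionVars false

section l1
variable {I : Type} {F : Type} [NormedAddCommGroup F] [NormedSpace ℝ F] [CompleteSpace F]

theorem l1_norm (f : lp (fun _ : I => ℝ) 1) : ‖f‖ = ∑' i, ‖f i‖ := by
  have := lp.norm_eq_tsum_rpow (p := 1) (by simp) f
  simpa using this

theorem l1_sum (f : lp (fun _ : I => ℝ) 1) : Summable (fun i => ‖f i‖) := by
  have := (lp.hasSum_norm (p := 1) (by simp) f).summable
  simpa using this

theorem l1_sum_smul (f : lp (fun _ : I => ℝ) 1) {x : I → F} {C : ℝ} (hx : ∀ i, ‖x i‖ ≤ C) :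
    Summable (fun i => ‖f i • x i‖) := by
  refine Summable.of_nonneg_of_le (fun _ => norm_nonneg _) (fun i => ?_) ((l1_sum f).mul_right C)
  rw [norm_smul]
  exact mul_le_mul_of_nonneg_left (hx i) (norm_nonneg _)

theorem l1_tsum_le (f : lp (fun _ : I => ℝ) 1) {x : I → F} {C : ℝ} (hx : ∀ i, ‖x i‖ ≤ C) :
    ‖∑' i, f i • x i‖ ≤ C * ‖f‖ := by
  have h1 : C * ‖f‖ = ∑' i, C * ‖f i‖ := by rw [l1_norm, tsum_mul_left]
  rw [h1]
  have h2 : ∀ i, ‖f i • x i‖ ≤ C * ‖f i‖ := fun i => by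
    rw [norm_smul, mul_comm]
    exact mul_le_mul_of_nonneg_right (hx i) (norm_nonneg _)
  have h3 := l1_sum_smul f hx
  have h4 : Summable (fun i => C * ‖f i‖) := (l1_sum f).mul_left C
  exact (norm_tsum_le_tsum_norm h3).trans (Summable.tsum_le_tsum h2 h3 h4)

/-- Universal property of l1. -/
def l1lift (x : I → F) (C : ℝ) (hx : ∀ i, ‖x i‖ ≤ C) : lp (fun _ : I => ℝ) 1 →L[ℝ] F :=
  LinearMap.mkContinuous
    { toFun := fun f => ∑' i, f i • x i
      map_add' := fun f g => by
        rw [← (l1_sum_smul f hx).of_norm.tsum_add (l1_sum_smul g hx).of_norm]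
        simp [add_smul]
      map_smul' := fun c f => by
        simp only [RingHom.id_apply]
        rw [← (l1_sum_smul f hx).of_norm.tsum_const_smul c]
        simp [mul_smul] } C (fun f => by
      simp only [LinearMap.coe_mk, AddHom.coe_mk]
      exact l1_tsum_le f hx)

theorem lift_apply (x : I → F) (C : ℝ) (hx : ∀ i, ‖x i‖ ≤ C) (f : lp (fun _ : I => ℝ) 1) :
    l1lift x C hx f = ∑' i, f i • x i := rfl

variable [DecidableEq I]

theorem lift_single (x : I → F) (C : ℝ) (hx : ∀ i, ‖x i‖ ≤ C) (i : I) :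
    l1lift x C hx (lp.single 1 i (1:ℝ)) = x i := by
  rw [lift_apply, tsum_eq_single i]
  · simp
  · intro j hj
    rw [lp.single_apply_ne 1 i _ hj, zero_smul]

theorem lift_norm (x : I → F) (C : ℝ) (hC : 0 ≤ C) (hx : ∀ i, ‖x i‖ ≤ C) :
    ‖l1lift x C hx‖ ≤ C := LinearMap.mkContinuous_norm_le _ hC _

theorem l1_ext {A B : lp (fun _ : I => ℝ) 1 →L[ℝ] F}
    (h : ∀ i, A (lp.single 1 i (1:ℝ)) = B (lp.single 1 i (1:ℝ))) : A = B := by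
  refine lp.ext_continuousLinearMap (by simp) (fun i => ?_)
  ext
  simpa using h i

theorem l1_bound (A : lp (fun _ : I => ℝ) 1 →L[ℝ] F) (C : ℝ)
    (h : ∀ i, ‖A (lp.single 1 i (1:ℝ))‖ ≤ C) (f : lp (fun _ : I => ℝ) 1) : ‖A f‖ ≤ C * ‖f‖ := by
  have : A = l1lift (fun i => A (lp.single 1 i (1:ℝ))) C h := by
    apply l1_ext; intro i; rw [lift_single]
  rw [this, lift_apply]
  exact l1_tsum_le f h
end l1

/-- index set: exponents (i,k) of q^i z^k with i+k odd -/
abbrev Ix : Type := {p : ℕ × ℕ // Odd (p.1 + p.2)}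

abbrev EE : Type := lp (fun _ : Ix => ℝ) 1

def bs (p : Ix) : EE := lp.single 1 p (1:ℝ)

theorem bs_norm (p : Ix) : ‖bs p‖ = 1 := by
  unfold bs; rw [lp.norm_single (by simp)]; simp

/-- total version -/
def bt (i k : ℕ) : EE := if h : Odd (i + k) then bs ⟨(i, k), h⟩ else 0

theorem bt_norm (i k : ℕ) : ‖bt i k‖ ≤ 1 := by
  unfold bt; split_ifs
  · rw [bs_norm]
  · simp

def add3 (p q r : Ix) : Ix := ⟨(p.1.1 + q.1.1 + r.1.1, p.1.2 + q.1.2 + r.1.2), by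
  have := p.2; have := q.2; have := r.2; simp only [Nat.odd_iff] at *; omega⟩

def MM : EE →L[ℝ] EE →L[ℝ] EE →L[ℝ] EE :=
  l1lift (fun p => l1lift (fun q => l1lift (fun r => bs (add3 p q r)) 1 (fun _ => (bs_norm _).le)) 1
    (fun _ => lift_norm _ _ zero_le_one _)) 1 (fun _ => lift_norm _ _ zero_le_one _)

theorem MM_bs (p q r : Ix) : MM (bs p) (bs q) (bs r) = bs (add3 p q r) := by
  unfold MM
  conv_lhs =>
    rw [show bs p = lp.single 1 p 1 from rfl, lift_single, show bs q = lp.single 1 q 1 from rfl,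
      lift_single, show bs r = lp.single 1 r 1 from rfl, lift_single]

/-- degree -/
def dg (p : Ix) : ℕ := 2 * p.1.1 + p.1.2

def iq : Ix := ⟨(1, 0), by decide⟩
def iz : Ix := ⟨(0, 1), by decide⟩

def dd (p : Ix) : ℝ := if p = iq then 1 else 6 - (dg p : ℝ) * (dg p + 1)

def rho : ℝ := 100

theorem dg_ge (p : Ix) (h1 : p ≠ iq) (h2 : p ≠ iz) : 3 ≤ dg p := by
  obtain ⟨⟨i, k⟩, h⟩ := p
  rw [Nat.odd_iff] at h
  simp only [iq, iz, ne_eq, Subtype.mk.injEq, Prod.mk.injEq, dg] at *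
  omega

theorem dd_ge (p : Ix) : 1 ≤ |dd p| := by
  unfold dd
  split_ifs with h
  · simp
  · by_cases h2 : p = iz
    · subst h2; norm_num [dg, iz]
    · have h3 : (3:ℝ) ≤ dg p := by exact_mod_cast dg_ge p h h2
      rw [abs_of_nonpos (by nlinarith)]
      nlinarith

theorem dd_ne (p : Ix) : dd p ≠ 0 := by
  intro h; have := dd_ge p; rw [h] at this; norm_num at this

/-- The lowering part of the Laplacian on normalised monomials -/
def LL (p : Ix) : EE :=
  (-(4 * (p.1.1:ℝ) * (p.1.1 - 1) / rho ^ 2)) • bt (p.1.1 - 2) (p.1.2 + 2)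
  + (4 * (p.1.1:ℝ) * (p.1.1 - 1) / rho ^ 4) • bt (p.1.1 - 2) p.1.2
  + ((p.1.2:ℝ) * (p.1.2 - 1) / rho ^ 2) • bt p.1.1 (p.1.2 - 2)

theorem cast_mul_pred_nonneg (n : ℕ) : (0:ℝ) ≤ (n:ℝ) * (n - 1) := by
  rcases n with _ | n
  · simp
  · push_cast; ring_nf; positivity


theorem LL_norm (p : Ix) : ‖LL p‖ ≤ |dd p| / 2 := by
  have hr : rho = 100 := rfl
  by_cases h1 : p = iq
  · subst h1; simp [LL, iq]; positivity
  by_cases h2 : p = iz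
  · subst h2; simp [LL, iz]; positivity
  have h3 : (3:ℝ) ≤ dg p := by exact_mod_cast dg_ge p h1 h2
  have hn : (dg p : ℝ) = 2 * (p.1.1:ℝ) + p.1.2 := by simp [dg]
  have hd : dd p = 6 - (dg p : ℝ) * (dg p + 1) := by simp [dd, h1]
  rw [hd, abs_of_nonpos (by nlinarith)]
  have a1 := cast_mul_pred_nonneg p.1.1
  have a2 := cast_mul_pred_nonneg p.1.2
  have b1 : ‖(-(4 * (p.1.1:ℝ) * (p.1.1 - 1) / rho ^ 2)) • bt (p.1.1 - 2) (p.1.2 + 2)‖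
      ≤ 4 * ((p.1.1:ℝ) * (p.1.1 - 1)) / rho ^ 2 := by
    rw [norm_smul, norm_neg, Real.norm_of_nonneg (by rw [hr, mul_assoc]; positivity), mul_assoc]
    exact mul_le_of_le_one_right (by rw [hr]; positivity) (bt_norm _ _)
  have b2 : ‖((4 * (p.1.1:ℝ) * (p.1.1 - 1) / rho ^ 4)) • bt (p.1.1 - 2) (p.1.2)‖
      ≤ 4 * ((p.1.1:ℝ) * (p.1.1 - 1)) / rho ^ 4 := by
    rw [norm_smul, Real.norm_of_nonneg (by rw [hr, mul_assoc]; positivity), mul_assoc]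
    exact mul_le_of_le_one_right (by rw [hr]; positivity) (bt_norm _ _)
  have b3 : ‖((p.1.2:ℝ) * (p.1.2 - 1) / rho ^ 2) • bt (p.1.1) (p.1.2 - 2)‖
      ≤ ((p.1.2:ℝ) * (p.1.2 - 1)) / rho ^ 2 := by
    rw [norm_smul, Real.norm_of_nonneg (by rw [hr]; positivity)]
    exact mul_le_of_le_one_right (by rw [hr]; positivity) (bt_norm _ _)
  have b4 : ‖LL p‖ ≤ 4 * ((p.1.1:ℝ) * (p.1.1 - 1)) / rho ^ 2 + 4 * ((p.1.1:ℝ) * (p.1.1 - 1)) / rho ^ 4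
      + ((p.1.2:ℝ) * (p.1.2 - 1)) / rho ^ 2 :=
    (norm_add_le _ _).trans (add_le_add ((norm_add_le _ _).trans (add_le_add b1 b2)) b3)
  refine b4.trans ?_
  rw [hr]
  have c1 : (0:ℝ) ≤ p.1.1 := by positivity
  have c2 : (0:ℝ) ≤ p.1.2 := by positivity
  rw [hn] at h3 ⊢
  generalize (p.1.1:ℝ) = x at *
  generalize (p.1.2:ℝ) = y at *
  have d1 : 4 * (x * (x-1)) + y * (y - 1) ≤ (2*x+y)^2 := by nlinarith [mul_nonneg c1 c2]
  have d2 : (2*x+y)^2 * (2/3) ≤ -(6 - (2*x+y)*(2*x+y+1)) := by nlinarith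
  norm_num
  nlinarith

def Dinv : EE →L[ℝ] EE :=
  l1lift (fun p => (dd p)⁻¹ • bs p) 1 (fun p => by
    rw [norm_smul, bs_norm, mul_one, norm_inv, Real.norm_eq_abs]
    exact inv_le_one_of_one_le₀ (dd_ge p))

theorem Dinv_bs (p : Ix) : Dinv (bs p) = (dd p)⁻¹ • bs p := lift_single _ _ _ _

theorem BB_aux (p : Ix) : ‖(dd p)⁻¹ • LL p‖ ≤ 1 / 2 := by
  rw [norm_smul, norm_inv, Real.norm_eq_abs]
  have h := dd_ge p
  have h2 := LL_norm p
  calc |dd p|⁻¹ * ‖LL p‖ ≤ |dd p|⁻¹ * (|dd p| / 2) := by gcongr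
    _ = 1 / 2 := by field_simp

def BB : EE →L[ℝ] EE := l1lift (fun p => (dd p)⁻¹ • LL p) (1/2) BB_aux

theorem BB_bs (p : Ix) : BB (bs p) = (dd p)⁻¹ • LL p := lift_single _ _ _ _

theorem BB_norm : ‖-BB‖ < 1 := by
  rw [norm_neg]
  exact lt_of_le_of_lt (lift_norm _ _ (by norm_num) _) (by norm_num)

theorem exists_CC : ∃ C : EE →L[ℝ] EE, (∀ f, C f + BB (C f) = f) ∧ (∀ f, C (f + BB f) = f) := by
  refine ⟨↑(Units.oneSub (-BB) BB_norm)⁻¹, fun f => ?_, fun f => ?_⟩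
  · have h := (Units.oneSub (-BB) BB_norm).mul_inv
    have h2 := congrArg (fun T : EE →L[ℝ] EE => T f) h
    simpa [mul_apply_eq_comp] using h2
  · have h := (Units.oneSub (-BB) BB_norm).inv_mul
    have h2 := congrArg (fun T : EE →L[ℝ] EE => T f) h
    simpa [mul_apply_eq_comp] using h2

def CC : EE →L[ℝ] EE := exists_CC.choose
theorem CC_right (f : EE) : CC f + BB (CC f) = f := exists_CC.choose_spec.1 f
theorem CC_left (f : EE) : CC (f + BB f) = f := exists_CC.choose_spec.2 f

def KK : EE →L[ℝ] EE := Dinv.comp CC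

theorem KK_T (p : Ix) : KK (dd p • bs p + LL p) = bs p := by
  have h : dd p • bs p + LL p = dd p • bs p + BB (dd p • bs p) := by
    rw [map_smul, BB_bs, smul_inv_smul₀ (dd_ne p)]
  unfold KK
  rw [ContinuousLinearMap.comp_apply, h, CC_left, map_smul, Dinv_bs, smul_inv_smul₀ (dd_ne p)]

end

section

open Real in
def QQ (θ φ : ℝ) : ℝ := sin θ ^ 2 * cos (2 * φ)
open Real in
def QT (θ φ : ℝ) : ℝ := 2 * sin θ * cos θ * cos (2 * φ)
open Real in
def QTT (θ φ : ℝ) : ℝ := 2 * (cos θ ^ 2 - sin θ ^ 2) * cos (2 * φ)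
open Real in
def QP (θ φ : ℝ) : ℝ := - 2 * sin θ ^ 2 * sin (2 * φ)

theorem QQ_abs (θ φ : ℝ) : |QQ θ φ| ≤ 1 := by
  unfold QQ
  rw [abs_mul, abs_pow]
  have h1 := Real.abs_sin_le_one θ
  have h2 := Real.abs_cos_le_one (2 * φ)
  exact mul_le_one₀ (pow_le_one₀ (abs_nonneg _) h1) (abs_nonneg _) h2

theorem QT_abs (θ φ : ℝ) : |QT θ φ| ≤ 2 := by
  unfold QT
  rw [abs_mul, abs_mul, abs_mul, abs_two]
  have h1 := Real.abs_sin_le_one θ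
  have h3 := Real.abs_cos_le_one θ
  have h2 := Real.abs_cos_le_one (2 * φ)
  have h4 : |Real.sin θ| * |Real.cos θ| ≤ 1 := mul_le_one₀ h1 (abs_nonneg _) h3
  have := mul_le_one₀ h4 (abs_nonneg _) h2
  linarith

theorem QTT_abs (θ φ : ℝ) : |QTT θ φ| ≤ 2 := by
  unfold QTT
  rw [← Real.cos_two_mul', abs_mul, abs_mul, abs_two]
  have := mul_le_one₀ (Real.abs_cos_le_one (2*θ)) (abs_nonneg _) (Real.abs_cos_le_one (2 * φ))
  linarith

theorem QP_abs (θ φ : ℝ) : |QP θ φ| ≤ 2 := by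
  unfold QP
  rw [abs_mul, abs_mul, abs_neg, abs_two, abs_pow]
  have := mul_le_one₀ (pow_le_one₀ (n := 2) (abs_nonneg _) (Real.abs_sin_le_one θ)) (abs_nonneg _) (Real.abs_sin_le_one (2 * φ))
  linarith

theorem QQ_T (θ φ : ℝ) : HasDerivAt (fun t => QQ t φ) (QT θ φ) θ := by
  have := ((Real.hasDerivAt_sin θ).pow 2).mul_const (Real.cos (2 * φ))
  exact this.congr_deriv (by simp [QT])

theorem QT_T (θ φ : ℝ) : HasDerivAt (fun t => QT t φ) (QTT θ φ) θ := by
  have := (((Real.hasDerivAt_sin θ).const_mul 2).mul (Real.hasDerivAt_cos θ)).mul_const (Real.cos (2 * φ))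
  exact this.congr_deriv (by simp only [QTT]; ring)

theorem QQ_P (θ φ : ℝ) : HasDerivAt (fun t => QQ θ t) (QP θ φ) φ := by
  have := (((hasDerivAt_id φ).const_mul 2).cos).const_mul (Real.sin θ ^ 2)
  exact this.congr_deriv (by simp [QP]; ring)

theorem QP_P (θ φ : ℝ) : HasDerivAt (fun t => QP θ t) (-4 * QQ θ φ) φ := by
  have := (((hasDerivAt_id φ).const_mul 2).sin).const_mul (-2 * Real.sin θ ^ 2)
  exact this.congr_deriv (by simp [QQ]; ring)

def mn (p : Ix) (θ φ : ℝ) : ℝ := QQ θ φ ^ p.1.1 * Real.cos θ ^ p.1.2 / rho ^ dg p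

def mT (p : Ix) (θ φ : ℝ) : ℝ :=
  ((p.1.1 * QQ θ φ ^ (p.1.1 - 1) * QT θ φ) * Real.cos θ ^ p.1.2 +
    QQ θ φ ^ p.1.1 * (p.1.2 * Real.cos θ ^ (p.1.2 - 1) * (- Real.sin θ))) / rho ^ dg p

def mTT (p : Ix) (θ φ : ℝ) : ℝ :=
  (((p.1.1 * (((p.1.1 - 1 : ℕ) : ℝ) * QQ θ φ ^ (p.1.1 - 1 - 1) * QT θ φ)) * QT θ φ
      + p.1.1 * QQ θ φ ^ (p.1.1 - 1) * QTT θ φ) * Real.cos θ ^ p.1.2 +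
    (p.1.1 * QQ θ φ ^ (p.1.1 - 1) * QT θ φ) * (p.1.2 * Real.cos θ ^ (p.1.2 - 1) * (- Real.sin θ)) +
    ((p.1.1 * QQ θ φ ^ (p.1.1 - 1) * QT θ φ) * (p.1.2 * Real.cos θ ^ (p.1.2 - 1) * (- Real.sin θ)) +
    QQ θ φ ^ p.1.1 * (p.1.2 * (((p.1.2 - 1 : ℕ) : ℝ) * Real.cos θ ^ (p.1.2 - 1 - 1) * (- Real.sin θ))
       * (- Real.sin θ) + p.1.2 * Real.cos θ ^ (p.1.2 - 1) * (- Real.cos θ)))) / rho ^ dg p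

def mP (p : Ix) (θ φ : ℝ) : ℝ :=
  ((p.1.1 * QQ θ φ ^ (p.1.1 - 1) * QP θ φ) * Real.cos θ ^ p.1.2) / rho ^ dg p

def mPP (p : Ix) (θ φ : ℝ) : ℝ :=
  ((p.1.1 * (((p.1.1 - 1 : ℕ) : ℝ) * QQ θ φ ^ (p.1.1 - 1 - 1) * QP θ φ)) * QP θ φ
      + p.1.1 * QQ θ φ ^ (p.1.1 - 1) * (-4 * QQ θ φ)) * Real.cos θ ^ p.1.2 / rho ^ dg p

theorem mn_T (p : Ix) (θ φ : ℝ) : HasDerivAt (fun t => mn p t φ) (mT p θ φ) θ :=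
  (((QQ_T θ φ).pow p.1.1).mul ((Real.hasDerivAt_cos θ).pow p.1.2)).div_const _

theorem mT_T (p : Ix) (θ φ : ℝ) : HasDerivAt (fun t => mT p t φ) (mTT p θ φ) θ :=
  ((((((QQ_T θ φ).pow (p.1.1 - 1)).const_mul (p.1.1 : ℝ)).mul (QT_T θ φ)).mul
    ((Real.hasDerivAt_cos θ).pow p.1.2)).add (((QQ_T θ φ).pow p.1.1).mul
    ((((Real.hasDerivAt_cos θ).pow (p.1.2 - 1)).const_mul (p.1.2:ℝ)).mul
      (Real.hasDerivAt_sin θ).neg))).div_const _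

theorem mn_P (p : Ix) (θ φ : ℝ) : HasDerivAt (fun t => mn p θ t) (mP p θ φ) φ :=
  (((QQ_P θ φ).pow p.1.1).mul_const _).div_const _

theorem mP_P (p : Ix) (θ φ : ℝ) : HasDerivAt (fun t => mP p θ t) (mPP p θ φ) φ :=
  (((((QQ_P θ φ).pow (p.1.1 - 1)).const_mul (p.1.1 : ℝ)).mul (QP_P θ φ)).mul_const _).div_const _

theorem rho_bd (n : ℕ) : (n:ℝ)^2 ≤ rho ^ n ∧ (n:ℝ) ≤ rho ^ n ∧ 1 ≤ rho ^ n := by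
  have h : n ^ 2 ≤ 100 ^ n ∧ n ≤ 100 ^ n := by
    have h1 : n < 2 ^ n := Nat.lt_two_pow_self
    have h2 : n ^ 2 ≤ (2 ^ n) ^ 2 := Nat.pow_le_pow_left h1.le 2
    have h3 : (2 ^ n) ^ 2 ≤ 100 ^ n := by
      rw [← pow_mul, mul_comm, pow_mul]; exact Nat.pow_le_pow_left (by norm_num) n
    have h4 : 2 ^ n ≤ 100 ^ n := Nat.pow_le_pow_left (by norm_num) n
    exact ⟨h2.trans h3, h1.le.trans h4⟩
  unfold rho
  refine ⟨by exact_mod_cast h.1, by exact_mod_cast h.2, one_le_pow₀ (by norm_num)⟩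

theorem rho_pos (n : ℕ) : 0 < rho ^ n := by unfold rho; positivity

theorem pw (x : ℝ) (h : |x| ≤ 1) (n : ℕ) : |x ^ n| ≤ 1 := by
  rw [abs_pow]; exact pow_le_one₀ (abs_nonneg _) h

theorem am {x y a b : ℝ} (hx : |x| ≤ a) (hy : |y| ≤ b) : |x * y| ≤ a * b := by
  rw [abs_mul]; exact mul_le_mul hx hy (abs_nonneg _) ((abs_nonneg _).trans hx)

theorem aa {x y a b : ℝ} (hx : |x| ≤ a) (hy : |y| ≤ b) : |x + y| ≤ a + b :=
  (abs_add_le _ _).trans (add_le_add hx hy)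

theorem ac (n : ℕ) : |(n:ℝ)| ≤ n := by simp

theorem ad {x a : ℝ} {n : ℕ} (hx : |x| ≤ a) (h : a ≤ rho ^ n) : |x / rho ^ n| ≤ 1 := by
  rw [abs_div, abs_of_pos (rho_pos n), div_le_one (rho_pos n)]; exact hx.trans h

theorem dg_cast (p : Ix) : (dg p : ℝ) = 2 * p.1.1 + p.1.2 := by simp [dg]

theorem mn_bd (p : Ix) (θ φ : ℝ) : |mn p θ φ| ≤ 1 / rho ^ dg p := by
  unfold mn
  rw [abs_div, abs_of_pos (rho_pos _)]
  have := am (pw _ (QQ_abs θ φ) p.1.1) (pw _ (Real.abs_cos_le_one θ) p.1.2)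
  exact div_le_div_of_nonneg_right (by simpa using this) (rho_pos _).le

theorem mn_bd1 (p : Ix) (θ φ : ℝ) : |mn p θ φ| ≤ 1 := by
  refine (mn_bd p θ φ).trans ?_
  rw [div_le_one (rho_pos _)]; exact (rho_bd _).2.2

theorem nat_pred (n : ℕ) : (n:ℝ) * ((n - 1 : ℕ) : ℝ) = n * (n - 1) := by
  rcases n with _ | n <;> simp

theorem mT_bd (p : Ix) (θ φ : ℝ) : |mT p θ φ| ≤ 1 := by
  have hq := pw _ (QQ_abs θ φ)
  have hc := pw _ (Real.abs_cos_le_one θ)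
  have hs : |-Real.sin θ| ≤ 1 := by rw [abs_neg]; exact Real.abs_sin_le_one θ
  refine ad (aa (am (am (am (ac _) (hq _)) (QT_abs θ φ)) (hc _)) (am (hq _) (am (am (ac _) (hc _)) hs))) ?_
  refine le_trans (le_of_eq ?_) (rho_bd (dg p)).2.1
  rw [dg_cast]; ring

theorem mTT_bd (p : Ix) (θ φ : ℝ) : |mTT p θ φ| ≤ 1 := by
  have hq := pw _ (QQ_abs θ φ)
  have hc := pw _ (Real.abs_cos_le_one θ)
  have hs : |-Real.sin θ| ≤ 1 := by rw [abs_neg]; exact Real.abs_sin_le_one θ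
  have hc' : |-Real.cos θ| ≤ 1 := by rw [abs_neg]; exact Real.abs_cos_le_one θ
  refine ad (aa (aa (am (aa (am (am (ac _) (am (am (ac _) (hq _)) (QT_abs θ φ))) (QT_abs θ φ))
    (am (am (ac _) (hq _)) (QTT_abs θ φ))) (hc _)) (am (am (am (ac _) (hq _)) (QT_abs θ φ)) (am (am (ac _) (hc _)) hs)))
    (aa (am (am (am (ac _) (hq _)) (QT_abs θ φ)) (am (am (ac _) (hc _)) hs))
    (am (hq _) (aa (am (am (ac _) (am (am (ac _) (hc _)) hs)) hs) (am (am (ac _) (hc _)) hc'))))) ?_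
  refine le_trans ?_ (rho_bd (dg p)).1
  rw [dg_cast]
  have h1 := nat_pred p.1.1
  have h2 := nat_pred p.1.2
  have h3 : (0:ℝ) ≤ p.1.1 := by positivity
  have h4 : (0:ℝ) ≤ p.1.2 := by positivity
  nlinarith

theorem mP_bd (p : Ix) (θ φ : ℝ) : |mP p θ φ| ≤ 1 := by
  have hq := pw _ (QQ_abs θ φ)
  have hc := pw _ (Real.abs_cos_le_one θ)
  refine ad (am (am (am (ac _) (hq _)) (QP_abs θ φ)) (hc _)) ?_
  refine le_trans ?_ (rho_bd (dg p)).2.1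
  rw [dg_cast]
  have h4 : (0:ℝ) ≤ p.1.2 := by positivity
  linarith

theorem mPP_bd (p : Ix) (θ φ : ℝ) : |mPP p θ φ| ≤ 1 := by
  have hq := pw _ (QQ_abs θ φ)
  have hc := pw _ (Real.abs_cos_le_one θ)
  have h4 : |-4 * QQ θ φ| ≤ 4 * 1 := am (by norm_num) (QQ_abs θ φ)
  refine ad (am (aa (am (am (ac _) (am (am (ac _) (hq _)) (QP_abs θ φ))) (QP_abs θ φ))
    (am (am (ac _) (hq _)) h4)) (hc _)) ?_
  refine le_trans ?_ (rho_bd (dg p)).1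
  rw [dg_cast]
  have h1 := nat_pred p.1.1
  have h3 : (0:ℝ) ≤ p.1.1 := by positivity
  have h4 : (0:ℝ) ≤ p.1.2 := by positivity
  nlinarith [mul_nonneg h3 h4]

/-- evaluation functionals -/
def eL (θ φ : ℝ) : EE →L[ℝ] ℝ := l1lift (fun p => mn p θ φ) 1 (fun p => mn_bd1 p θ φ)
def eT (θ φ : ℝ) : EE →L[ℝ] ℝ := l1lift (fun p => mT p θ φ) 1 (fun p => mT_bd p θ φ)
def eTT (θ φ : ℝ) : EE →L[ℝ] ℝ := l1lift (fun p => mTT p θ φ) 1 (fun p => mTT_bd p θ φ)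
def eP (θ φ : ℝ) : EE →L[ℝ] ℝ := l1lift (fun p => mP p θ φ) 1 (fun p => mP_bd p θ φ)
def ePP (θ φ : ℝ) : EE →L[ℝ] ℝ := l1lift (fun p => mPP p θ φ) 1 (fun p => mPP_bd p θ φ)

theorem l1_hasDeriv (f : EE) (g g' : Ix → ℝ → ℝ) (hg : ∀ p t, HasDerivAt (g p) (g' p t) t)
    (h0 : ∀ p t, ‖g p t‖ ≤ 1) (h1 : ∀ p t, ‖g' p t‖ ≤ 1) (t : ℝ) :
    HasDerivAt (fun t => l1lift (fun p => g p t) 1 (fun p => h0 p t) f)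
      (l1lift (fun p => g' p t) 1 (fun p => h1 p t) f) t := by
  simp only [lift_apply, smul_eq_mul]
  refine hasDerivAt_tsum (u := fun p => ‖f p‖) (l1_sum f) (fun p y => (hg p y).const_mul (f p))
    (fun p y => ?_) (y₀ := t) ?_ t
  · rw [norm_mul]
    exact mul_le_of_le_one_right (norm_nonneg _) (h1 p y)
  · exact (l1_sum_smul f (fun p => h0 p t)).of_norm

theorem eL_T (f : EE) (θ φ : ℝ) : HasDerivAt (fun t => eL t φ f) (eT θ φ f) θ :=
  l1_hasDeriv f (fun p t => mn p t φ) (fun p t => mT p t φ) (fun p t => mn_T p t φ)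
    (fun p t => mn_bd1 p t φ) (fun p t => mT_bd p t φ) θ
theorem eT_T (f : EE) (θ φ : ℝ) : HasDerivAt (fun t => eT t φ f) (eTT θ φ f) θ :=
  l1_hasDeriv f (fun p t => mT p t φ) (fun p t => mTT p t φ) (fun p t => mT_T p t φ)
    (fun p t => mT_bd p t φ) (fun p t => mTT_bd p t φ) θ
theorem eL_P (f : EE) (θ φ : ℝ) : HasDerivAt (fun t => eL θ t f) (eP θ φ f) φ :=
  l1_hasDeriv f (fun p t => mn p θ t) (fun p t => mP p θ t) (fun p t => mn_P p θ t)
    (fun p t => mn_bd1 p θ t) (fun p t => mP_bd p θ t) φ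
theorem eP_P (f : EE) (θ φ : ℝ) : HasDerivAt (fun t => eP θ t f) (ePP θ φ f) φ :=
  l1_hasDeriv f (fun p t => mP p θ t) (fun p t => mPP p θ t) (fun p t => mP_P p θ t)
    (fun p t => mP_bd p θ t) (fun p t => mPP_bd p θ t) φ

def ev (f : EE) : SphereFun := fun θ φ => eL θ φ f

theorem eL_bs (p : Ix) (θ φ : ℝ) : eL θ φ (bs p) = mn p θ φ := lift_single _ _ _ _

theorem dTheta_ev (f : EE) (θ φ : ℝ) : dTheta (ev f) θ φ = eT θ φ f := (eL_T f θ φ).deriv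
theorem dPhi_ev (f : EE) (θ φ : ℝ) : dPhi (ev f) θ φ = eP θ φ f := (eL_P f θ φ).deriv

theorem lapS_ev (f : EE) (θ φ : ℝ) : lapS (ev f) θ φ =
    (1 / Real.sin θ) * (Real.cos θ * eT θ φ f + Real.sin θ * eTT θ φ f) +
      (1 / (Real.sin θ)^2) * ePP θ φ f := by
  unfold lapS
  have h1 : (fun t => Real.sin t * dTheta (ev f) t φ) = fun t => Real.sin t * eT t φ f := by
    funext t; rw [dTheta_ev]
  have h2 : dPhi (dPhi (ev f)) θ φ = ePP θ φ f := by
    have : dPhi (ev f) = fun θ φ => eP θ φ f := by funext a b; exact dPhi_ev f a b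
    rw [this]; exact (eP_P f θ φ).deriv
  have h3 : HasDerivAt (fun t => Real.sin t * eT t φ f) _ θ := (Real.hasDerivAt_sin θ).mul (eT_T f θ φ)
  rw [h1, h2, h3.deriv]

def lapL (θ φ : ℝ) : EE →L[ℝ] ℝ :=
  (1 / Real.sin θ) • (Real.cos θ • eT θ φ + Real.sin θ • eTT θ φ) + (1 / (Real.sin θ)^2) • ePP θ φ

theorem lapS_ev' (f : EE) (θ φ : ℝ) : lapS (ev f) θ φ = lapL θ φ f := by
  rw [lapS_ev]; simp [lapL]; ring

theorem eL_MM (f g h : EE) (θ φ : ℝ) : eL θ φ (MM f g h) = eL θ φ f * eL θ φ g * eL θ φ h := by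
  have h1 : ∀ (p q : Ix) (h : EE), eL θ φ (MM (bs p) (bs q) h) = eL θ φ (bs p) * eL θ φ (bs q) * eL θ φ h := by
    intro p q h
    have : (eL θ φ).comp (MM (bs p) (bs q)) = (eL θ φ (bs p) * eL θ φ (bs q)) • eL θ φ := by
      apply l1_ext; intro r
      change eL θ φ (MM (bs p) (bs q) (bs r)) = (eL θ φ (bs p) * eL θ φ (bs q)) * eL θ φ (bs r)
      rw [MM_bs, eL_bs, eL_bs, eL_bs, eL_bs]
      have := (rho_pos (dg p)).ne'
      have := (rho_pos (dg q)).ne'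
      have := (rho_pos (dg r)).ne'
      have h5 : rho ^ dg (add3 p q r) = rho ^ dg p * rho ^ dg q * rho ^ dg r := by
        rw [← pow_add, ← pow_add]; congr 1; simp [dg, add3]; ring
      simp only [mn, h5]
      simp only [add3]
      field_simp
      ring
    exact congrArg (fun T : EE →L[ℝ] ℝ => T h) this
  have h2 : ∀ (p : Ix) (g h : EE), eL θ φ (MM (bs p) g h) = eL θ φ (bs p) * eL θ φ g * eL θ φ h := by
    intro p g h
    have : (eL θ φ).comp ((ContinuousLinearMap.apply ℝ EE h).comp (MM (bs p))) = (eL θ φ (bs p) * eL θ φ h) • eL θ φ := by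
      apply l1_ext; intro q
      change eL θ φ (MM (bs p) (bs q) h) = (eL θ φ (bs p) * eL θ φ h) * eL θ φ (bs q)
      rw [h1]; ring
    have := congrArg (fun T : EE →L[ℝ] ℝ => T g) this
    simp only [ContinuousLinearMap.comp_apply, ContinuousLinearMap.apply_apply] at this
    rw [this]; simp; ring
  have : (eL θ φ).comp ((ContinuousLinearMap.apply ℝ EE h).comp ((ContinuousLinearMap.apply ℝ (EE →L[ℝ] EE) g).comp MM)) = (eL θ φ g * eL θ φ h) • eL θ φ := by
    apply l1_ext; intro q
    change eL θ φ (MM (bs q) g h) = (eL θ φ g * eL θ φ h) * eL θ φ (bs q)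
    rw [h2]; ring
  have := congrArg (fun T : EE →L[ℝ] ℝ => T f) this
  simp only [ContinuousLinearMap.comp_apply, ContinuousLinearMap.apply_apply] at this
  rw [this]; simp; ring

end

section

def PiQ : EE →L[ℝ] ℝ := l1lift (fun p => if p = iq then (1:ℝ) else 0) 1 (fun p => by split_ifs <;> simp)

theorem PiQ_bs (p : Ix) : PiQ (bs p) = if p = iq then (1:ℝ) else 0 := lift_single _ _ _ _

theorem eL_bt (i k : ℕ) (h : Odd (i + k)) (θ φ : ℝ) :
    eL θ φ (bt i k) = QQ θ φ ^ i * Real.cos θ ^ k / rho ^ (2 * i + k) := by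
  simp only [bt, h, dif_pos, eL_bs]; rfl

theorem eL_LL (p : Ix) (θ φ : ℝ) : eL θ φ (LL p) * rho ^ dg p =
    (4 * (p.1.1:ℝ) * (p.1.1 - 1)) * (QQ θ φ ^ (p.1.1 - 2) * Real.cos θ ^ p.1.2 * (1 - Real.cos θ ^ 2))
    + (p.1.2:ℝ) * (p.1.2 - 1) * (QQ θ φ ^ p.1.1 * Real.cos θ ^ (p.1.2 - 2)) := by
  have hr : rho ≠ 0 := by unfold rho; norm_num
  obtain ⟨⟨i, k⟩, h⟩ := p
  simp only [LL, dg, map_add, map_smul, smul_eq_mul]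
  have e1 : ((4 * (i:ℝ) * (i - 1) / rho ^ 2)) * eL θ φ (bt (i - 2) (k + 2)) * rho ^ (2 * i + k)
      = (4 * (i:ℝ) * (i - 1)) * (QQ θ φ ^ (i - 2) * Real.cos θ ^ k * Real.cos θ ^ 2) := by
    rcases i with _ | _ | i
    · simp
    · simp
    · rw [eL_bt _ _ (by rw [Nat.odd_iff] at *; simp only at h; omega)]
      rw [show i + 1 + 1 - 2 = i from rfl]
      have : rho ^ (2 * (i + 1 + 1) + k) = rho ^ 2 * rho ^ (2 * i + (k + 2)) := by ring
      rw [this]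
      field_simp
      try ring
  have e2 : ((4 * (i:ℝ) * (i - 1) / rho ^ 4)) * eL θ φ (bt (i - 2) k) * rho ^ (2 * i + k)
      = (4 * (i:ℝ) * (i - 1)) * (QQ θ φ ^ (i - 2) * Real.cos θ ^ k) := by
    rcases i with _ | _ | i
    · simp
    · simp
    · rw [eL_bt _ _ (by rw [Nat.odd_iff] at *; simp only at h; omega)]
      rw [show i + 1 + 1 - 2 = i from rfl]
      have : rho ^ (2 * (i + 1 + 1) + k) = rho ^ 4 * rho ^ (2 * i + k) := by ring
      rw [this]
      field_simp
      try ring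
  have e3 : (((k:ℝ) * (k - 1) / rho ^ 2)) * eL θ φ (bt i (k - 2)) * rho ^ (2 * i + k)
      = (k:ℝ) * (k - 1) * (QQ θ φ ^ i * Real.cos θ ^ (k - 2)) := by
    rcases k with _ | _ | k
    · simp
    · simp
    · rw [eL_bt _ _ (by rw [Nat.odd_iff] at *; simp only at h; omega)]
      rw [show k + 1 + 1 - 2 = k from rfl]
      have : rho ^ (2 * i + (k + 1 + 1)) = rho ^ 2 * rho ^ (2 * i + k) := by ring
      rw [this]
      field_simp
      try ring
  linear_combination (-1) * e1 + e2 + e3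

theorem lapL_bs_aux (i k : ℕ) (s c C S : ℝ) (hs : s ≠ 0) (h1 : c ^ 2 = 1 - s ^ 2) (h2 : S ^ 2 = 1 - C ^ 2)
    (Q QT QTT QP : ℝ) (hQ : Q = s ^ 2 * C) (hQT : QT = 2 * s * c * C)
    (hQTT : QTT = 2 * (c ^ 2 - s ^ 2) * C) (hQP : QP = -2 * s ^ 2 * S) :
    1 / s * (c * ((i * Q ^ (i - 1) * QT) * c ^ k + Q ^ i * (k * c ^ (k - 1) * (- s)))
     + s * (((i * (((i - 1 : ℕ) : ℝ) * Q ^ (i - 1 - 1) * QT)) * QT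
      + i * Q ^ (i - 1) * QTT) * c ^ k +
    (i * Q ^ (i - 1) * QT) * (k * c ^ (k - 1) * (- s)) +
    ((i * Q ^ (i - 1) * QT) * (k * c ^ (k - 1) * (- s)) +
    Q ^ i * (k * (((k - 1 : ℕ) : ℝ) * c ^ (k - 1 - 1) * (- s))
       * (- s) + k * c ^ (k - 1) * (- c)))))
     + 1 / s ^ 2 * (((i * (((i - 1 : ℕ) : ℝ) * Q ^ (i - 1 - 1) * QP)) * QP
      + i * Q ^ (i - 1) * (-4 * Q)) * c ^ k)
     = - ((2 * i + k) * (2 * i + k + 1)) * (Q ^ i * c ^ k) +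
     (4 * (i:ℝ) * (i - 1)) * (Q ^ (i - 2) * c ^ k * (1 - c ^ 2))
    + (k:ℝ) * (k - 1) * (Q ^ i * c ^ (k - 2)) := by
  have a1 : (i:ℝ) * Q ^ (i-1) * Q = i * Q ^ i := by
    rcases i with _ | i
    · simp
    · simp; ring
  have a2 : (i:ℝ) * (((i - 1 : ℕ) : ℝ) * Q ^ (i - 1 - 1)) = i * (i - 1) * Q ^ (i - 2) := by
    rcases i with _ | i
    · simp
    · simp; ring_nf
  have a3 : (i:ℝ) * (i - 1) * Q ^ (i - 2) * Q ^ 2 = i * (i - 1) * Q ^ i := by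
    rcases i with _ | _ | i
    · simp
    · simp
    · simp; ring
  have b1 : (k:ℝ) * c ^ (k-1) * c = k * c ^ k := by
    rcases k with _ | i
    · simp
    · simp; ring
  have b2 : (k:ℝ) * (((k - 1 : ℕ) : ℝ) * c ^ (k - 1 - 1)) = k * (k - 1) * c ^ (k - 2) := by
    rcases k with _ | i
    · simp
    · simp; ring_nf
  have b3 : (k:ℝ) * (k - 1) * c ^ (k - 2) * c ^ 2 = k * (k - 1) * c ^ k := by
    rcases k with _ | _ | i
    · simp
    · simp
    · simp; ring
  -- geometric identities
  have g1 : QT ^ 2 + QP ^ 2 / s ^ 2 = 4 * (1 - c ^ 2) - 4 * Q ^ 2 := by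
    have h3 : QP ^ 2 / s ^ 2 = 4 * s ^ 2 * S ^ 2 := by rw [hQP]; field_simp; ring
    rw [h3, hQT, hQ]
    linear_combination (4 * s ^ 2 * C ^ 2 + 4) * h1 + 4 * s ^ 2 * h2
  have g2 : c / s * QT + QTT - 4 * Q / s ^ 2 = -6 * Q := by
    rw [hQT, hQTT, hQ]
    field_simp
    linear_combination (4 * C) * h1
  have g3 : QT * (-s) = - 2 * Q * c := by rw [hQT, hQ]; ring
  set A1 := (i:ℝ) * Q ^ (i-1)
  set B1 := (k:ℝ) * c ^ (k-1)
  have e : 1 / s * (c * ((A1 * QT) * c ^ k + Q ^ i * (B1 * (- s)))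
     + s * (((i * (((i - 1 : ℕ) : ℝ) * Q ^ (i - 1 - 1) * QT)) * QT
      + A1 * QTT) * c ^ k +
    (A1 * QT) * (B1 * (- s)) +
    ((A1 * QT) * (B1 * (- s)) +
    Q ^ i * (k * (((k - 1 : ℕ) : ℝ) * c ^ (k - 1 - 1) * (- s))
       * (- s) + B1 * (- c)))))
     + 1 / s ^ 2 * (((i * (((i - 1 : ℕ) : ℝ) * Q ^ (i - 1 - 1) * QP)) * QP
      + A1 * (-4 * Q)) * c ^ k)
     = (i:ℝ) * (((i - 1 : ℕ) : ℝ) * Q ^ (i - 1 - 1)) * (QT ^ 2 + QP ^ 2 / s ^ 2) * c ^ k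
      + A1 * (c / s * QT + QTT - 4 * Q / s ^ 2) * c ^ k
      + 2 * A1 * B1 * (QT * (-s))
      + Q ^ i * ((k:ℝ) * (((k - 1 : ℕ) : ℝ) * c ^ (k - 1 - 1))) * s ^ 2
      - 2 * Q ^ i * (B1 * c) := by
    field_simp
    ring
  rw [e, g1, g2, g3, a2, b2, b1]
  have h1' : s ^ 2 = 1 - c ^ 2 := by linarith
  rw [h1']
  linear_combination (-6 * c ^ k - 4 * B1 * c) * a1 - 4 * (i:ℝ) * Q ^ i * b1 - 4 * c ^ k * a3 - Q ^ i * b3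

theorem lapL_bs (p : Ix) (θ φ : ℝ) (hs : Real.sin θ ≠ 0) :
    lapL θ φ (bs p) + 6 * eL θ φ (bs p) + PiQ (bs p) * eL θ φ (bs iq) =
      eL θ φ (dd p • bs p + LL p) := by
  have h0 := (rho_pos (dg p)).ne'
  have hT : eT θ φ (bs p) = mT p θ φ := lift_single _ _ _ _
  have hTT : eTT θ φ (bs p) = mTT p θ φ := lift_single _ _ _ _
  have hPP : ePP θ φ (bs p) = mPP p θ φ := lift_single _ _ _ _
  have hl : lapL θ φ (bs p) * rho ^ dg p = - ((2 * p.1.1 + p.1.2) * (2 * p.1.1 + p.1.2 + 1)) * (mn p θ φ * rho ^ dg p)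
      + eL θ φ (LL p) * rho ^ dg p := by
    rw [eL_LL]
    have := lapL_bs_aux p.1.1 p.1.2 (Real.sin θ) (Real.cos θ) (Real.cos (2*φ)) (Real.sin (2*φ)) hs
      (by rw [Real.cos_sq']) (by rw [Real.sin_sq]) (QQ θ φ) (QT θ φ) (QTT θ φ) (QP θ φ) rfl rfl rfl rfl
    have hm : mn p θ φ * rho ^ dg p = QQ θ φ ^ p.1.1 * Real.cos θ ^ p.1.2 := by
      unfold mn; field_simp
    rw [hm, ← add_assoc, ← this, ← lapS_ev', lapS_ev, hT, hTT, hPP]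
    unfold mT mTT mPP
    field_simp
  have h3 : lapL θ φ (bs p) = - ((2 * p.1.1 + p.1.2) * (2 * p.1.1 + p.1.2 + 1)) * mn p θ φ + eL θ φ (LL p) := by
    apply mul_right_cancel₀ h0; rw [hl]; ring
  rw [h3, map_add, map_smul, PiQ_bs, smul_eq_mul]
  unfold dd
  split_ifs with h
  · subst h; simp only [eL_bs]; norm_num [iq]; ring
  · rw [eL_bs, dg_cast]; ring

theorem lapL_KK (f : EE) (θ φ : ℝ) (hs : Real.sin θ ≠ 0) :
    lapL θ φ (KK f) + 6 * eL θ φ (KK f) + PiQ (KK f) * eL θ φ (bs iq) = eL θ φ f := by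
  have key : (lapL θ φ + (6:ℝ) • eL θ φ + (eL θ φ (bs iq)) • PiQ).comp Dinv =
      eL θ φ + (eL θ φ).comp BB := by
    apply l1_ext
    intro p
    change (lapL θ φ + (6:ℝ) • eL θ φ + (eL θ φ (bs iq)) • PiQ) (Dinv (bs p)) = eL θ φ (bs p) + eL θ φ (BB (bs p))
    have := lapL_bs p θ φ hs
    rw [Dinv_bs, BB_bs, map_smul, map_smul]
    have h2 : (lapL θ φ + (6:ℝ) • eL θ φ + (eL θ φ (bs iq)) • PiQ) (bs p) = eL θ φ (dd p • bs p + LL p) := by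
      rw [← this]; simp; ring
    rw [h2, map_add, map_smul]
    simp only [smul_eq_mul]
    have := dd_ne p
    field_simp
  have := congrArg (fun T : EE →L[ℝ] ℝ => T (CC f)) key
  simp only [ContinuousLinearMap.comp_apply, add_apply, smul_apply, smul_eq_mul] at this
  rw [← map_add, CC_right] at this
  rw [← this]
  simp only [KK, ContinuousLinearMap.comp_apply]
  ring

end

section

def SN (n : ℕ) (f : ℝ × ℝ → ℝ) : Prop := ContDiff ℝ (⊤ : ℕ∞) f ∧
  ∀ (j : ℕ) (x : ℝ × ℝ), ‖iteratedFDeriv ℝ j f x‖ ≤ (2 * (n:ℝ)) ^ j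

theorem SN_mul {n m : ℕ} {f g : ℝ × ℝ → ℝ} (hf : SN n f) (hg : SN m g) : SN (n + m) (fun x => f x * g x) := by
  refine ⟨hf.1.mul hg.1, fun j x => ?_⟩
  refine (norm_iteratedFDeriv_mul_le hf.1 hg.1 x (n := j) (by exact_mod_cast le_top)).trans ?_
  have : (2 * ((n + m : ℕ):ℝ)) ^ j = (2 * (n:ℝ) + 2 * m) ^ j := by push_cast; ring
  rw [this, add_pow]
  refine Finset.sum_le_sum (fun l hl => ?_)
  have h1 := hf.2 l x
  have h2 := hg.2 (j - l) x
  calc (j.choose l : ℝ) * ‖iteratedFDeriv ℝ l f x‖ * ‖iteratedFDeriv ℝ (j - l) g x‖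
      ≤ (j.choose l : ℝ) * (2 * (n:ℝ)) ^ l * (2 * (m:ℝ)) ^ (j - l) := by gcongr
    _ = _ := by ring

theorem SN_one : SN 0 (fun _ => 1) := by
  refine ⟨contDiff_const, fun j x => ?_⟩
  rcases j with _ | j
  · simp
  · rw [iteratedFDeriv_const_of_ne (by simp)]; simp

theorem SN_pow {n : ℕ} {f : ℝ × ℝ → ℝ} (hf : SN n f) (k : ℕ) : SN (k * n) (fun x => f x ^ k) := by
  induction k with
  | zero => simpa using SN_one
  | succ k ih =>
    have := SN_mul ih hf
    simpa [pow_succ, add_mul] using this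

theorem SN_comp (h : ℝ → ℝ) (hc : ContDiff ℝ (⊤ : ℕ∞) h) (hb : ∀ j x, ‖iteratedDeriv j h x‖ ≤ 1)
    (L : ℝ × ℝ →L[ℝ] ℝ) (hL : ‖L‖ ≤ 2) : SN 1 (fun x => h (L x)) := by
  refine ⟨hc.comp L.contDiff, fun j x => ?_⟩
  have h1 := L.iteratedFDeriv_comp_right hc x (i := j) (by exact_mod_cast le_top)
  change ‖iteratedFDeriv ℝ j (h ∘ L) x‖ ≤ _
  rw [h1]
  refine (ContinuousMultilinearMap.norm_compContinuousLinearMap_le _ _).trans ?_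
  rw [norm_iteratedFDeriv_eq_norm_iteratedDeriv]
  simp only [Finset.prod_const, Finset.card_univ, Fintype.card_fin]
  calc ‖iteratedDeriv j h (L x)‖ * ‖L‖ ^ j ≤ 1 * 2 ^ j := by gcongr; exact hb _ _
    _ = _ := by simp

theorem sin_cos_bd (j : ℕ) : (∀ x, ‖iteratedDeriv j Real.sin x‖ ≤ 1) ∧ (∀ x, ‖iteratedDeriv j Real.cos x‖ ≤ 1) := by
  constructor
  · intro x; simpa using Real.abs_iteratedDeriv_sin_le_one j x
  · intro x; simpa using Real.abs_iteratedDeriv_cos_le_one j x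

theorem SN_raw (i k : ℕ) : SN (3 * i + k) (fun x : ℝ × ℝ => QQ x.1 x.2 ^ i * Real.cos x.1 ^ k) := by
  have hfst : ‖ContinuousLinearMap.fst ℝ ℝ ℝ‖ ≤ 1 := ContinuousLinearMap.norm_fst_le _ _ _
  have hsnd : ‖ContinuousLinearMap.snd ℝ ℝ ℝ‖ ≤ 1 := ContinuousLinearMap.norm_snd_le _ _ _
  have h1 : SN 1 (fun x : ℝ × ℝ => Real.sin x.1) := SN_comp Real.sin Real.contDiff_sin
    (fun j => (sin_cos_bd j).1) (ContinuousLinearMap.fst ℝ ℝ ℝ) (by linarith)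
  have h2 : SN 1 (fun x : ℝ × ℝ => Real.cos x.1) := SN_comp Real.cos Real.contDiff_cos
    (fun j => (sin_cos_bd j).2) (ContinuousLinearMap.fst ℝ ℝ ℝ) (by linarith)
  have h3 : SN 1 (fun x : ℝ × ℝ => Real.cos (2 * x.2)) := SN_comp Real.cos Real.contDiff_cos
    (fun j => (sin_cos_bd j).2) ((2:ℝ) • ContinuousLinearMap.snd ℝ ℝ ℝ) (by
      rw [norm_smul]; simp only [Real.norm_ofNat]; linarith)
  have h4 := SN_mul (SN_pow (SN_mul (SN_pow h1 2) h3) i) (SN_pow h2 k)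
  have e : i * (2 * 1 + 1) + k * 1 = 3 * i + k := by ring
  rw [e] at h4
  exact h4

theorem pow_bd (j : ℕ) : ∃ C : ℝ, ∀ n : ℕ, (4 * (n:ℝ)) ^ j / rho ^ n ≤ C := by
  have h := tendsto_pow_const_mul_const_pow_of_abs_lt_one j (r := 1 / rho) (by unfold rho; norm_num)
  obtain ⟨C, hC⟩ := h.bddAbove_range
  refine ⟨4 ^ j * C, fun n => ?_⟩
  have := hC ⟨n, rfl⟩
  simp only at this
  calc (4 * (n:ℝ)) ^ j / rho ^ n = 4 ^ j * ((n:ℝ) ^ j * (1 / rho) ^ n) := by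
        rw [mul_pow, one_div, inv_pow]; ring
    _ ≤ _ := by gcongr

theorem ev_smooth (f : EE) : SphSmooth (ev f) := by
  choose C hC using pow_bd
  have key : ContDiff ℝ (⊤ : ℕ∞) (fun x : ℝ × ℝ => ∑' p, f p * mn p x.1 x.2) := by
    refine contDiff_tsum (v := fun j p => ‖f p‖ * C j) (fun p => ?_) (fun j _ => (l1_sum f).mul_right _)
      (fun j p x _ => ?_)
    · exact contDiff_const.mul ((SN_raw p.1.1 p.1.2).1.div_const _)
    · have h := SN_raw p.1.1 p.1.2
      have e : (fun x : ℝ × ℝ => f p * mn p x.1 x.2) =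
          (f p / rho ^ dg p) • (fun x : ℝ × ℝ => QQ x.1 x.2 ^ p.1.1 * Real.cos x.1 ^ p.1.2) := by
        funext x; simp [mn]; ring
      rw [e, iteratedFDeriv_const_smul_apply (h.1.contDiffAt.of_le (by exact_mod_cast le_top)), norm_smul,
        norm_div, Real.norm_of_nonneg (rho_pos _).le]
      have h2 := h.2 j x
      have h3 : (2 * ((3 * p.1.1 + p.1.2 : ℕ):ℝ)) ^ j ≤ (4 * (dg p : ℝ)) ^ j := by
        gcongr ?_ ^ j
        rw [dg_cast]; push_cast
        have h3 : (0:ℝ) ≤ p.1.1 := by positivity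
        have h4 : (0:ℝ) ≤ p.1.2 := by positivity
        linarith
      have h4 := hC j (dg p)
      have := rho_pos (dg p)
      calc ‖f p‖ / rho ^ dg p * _ ≤ ‖f p‖ / rho ^ dg p * (4 * (dg p : ℝ)) ^ j := by gcongr; exact h2.trans h3
        _ = ‖f p‖ * ((4 * (dg p : ℝ)) ^ j / rho ^ dg p) := by ring
        _ ≤ _ := by gcongr
  exact key

theorem ev_cont (f : EE) : Continuous (Function.uncurry (ev f)) := (ev_smooth f).continuous

theorem ev_periodic (f : EE) : PeriodicPhi (ev f) := by
  intro θ φ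
  have : eL θ (φ + 2 * Real.pi) = eL θ φ := by
    apply l1_ext; intro p
    change eL θ (φ + 2 * Real.pi) (bs p) = eL θ φ (bs p)
    rw [eL_bs, eL_bs]
    simp only [mn, QQ]
    rw [show 2 * (φ + 2 * Real.pi) = 2 * φ + 2 * Real.pi + 2 * Real.pi by ring, Real.cos_add_two_pi, Real.cos_add_two_pi]
  simp only [ev, this]

end

section

open Polynomial in
def pd (n j : ℕ) : Polynomial ℝ := derivative^[j] ((X ^ 2 - 1) ^ n)

theorem iterD_poly (P : Polynomial ℝ) (j : ℕ) :
    iteratedDeriv j (fun x => P.eval x) = fun x => (Polynomial.derivative^[j] P).eval x := by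
  induction j generalizing P with
  | zero => simp
  | succ j ih =>
    rw [iteratedDeriv_succ']
    have : deriv (fun x => P.eval x) = fun x => (Polynomial.derivative P).eval x := by
      ext x; exact P.deriv
    rw [this, ih]; rfl

theorem legP_eq (n : ℕ) : legP n = fun s => (Polynomial.C (1 / ((2:ℝ)^n * (Nat.factorial n : ℝ))) * pd n n).eval s := by
  ext s
  unfold legP pd
  have : (fun x : ℝ => (x^2 - 1)^n) = fun x => (((Polynomial.X ^ 2 - 1) ^ n : Polynomial ℝ)).eval x := by
    ext x; simp
  rw [this, iterD_poly]; simp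

theorem pd_add (n j m : ℕ) : Polynomial.derivative^[m] (pd n j) = pd n (j + m) := by
  unfold pd; rw [← Function.iterate_add_apply, add_comm]

theorem assoc_eq (n m : ℕ) (θ : ℝ) : assocLegP n m (Real.cos θ) =
    (-1 : ℝ)^m * |Real.sin θ| ^ m * ((1 / ((2:ℝ)^n * (Nat.factorial n : ℝ))) * (pd n (n + m)).eval (Real.cos θ)) := by
  unfold assocLegP
  rw [legP_eq, iterD_poly, Polynomial.iterate_derivative_C_mul, pd_add]
  congr 1
  · congr 1
    have h1 : 1 - Real.cos θ ^ 2 = |Real.sin θ| ^ 2 := by rw [sq_abs]; linarith [Real.sin_sq_add_cos_sq θ]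
    rw [h1, ← Real.rpow_natCast, ← Real.rpow_natCast, ← Real.rpow_mul (abs_nonneg _)]
    congr 1
    push_cast; ring
  · simp

def tr (m : ℤ) (φ : ℝ) : ℝ := if 0 ≤ m then Real.cos ((m.natAbs : ℝ) * φ) else Real.sin ((m.natAbs : ℝ) * φ)

def NN (n : ℕ) (m : ℤ) : ℝ := (if m = 0 then Real.sqrt ((2*(n:ℝ)+1)/(4*Real.pi)) else
  Real.sqrt 2 * Real.sqrt ((2*(n:ℝ)+1)/(4*Real.pi) *
        ((Nat.factorial (n - m.natAbs) : ℝ) / (Nat.factorial (n + m.natAbs) : ℝ)))) * (1 / ((2:ℝ)^n * (Nat.factorial n : ℝ)))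

theorem Y_eq (n : ℕ) (m : ℤ) (θ φ : ℝ) : Ynm n m θ φ =
    NN n m * (|Real.sin θ| ^ m.natAbs * (pd n (n + m.natAbs)).eval (Real.cos θ)) * tr m φ := by
  have hs : ((-1 : ℝ)^(m.natAbs)) * (-1 : ℝ)^(m.natAbs) = 1 := by
    rw [← mul_pow]; simp
  unfold Ynm NN tr
  rcases lt_trichotomy m 0 with h | h | h
  · rw [if_neg h.ne, if_neg (by omega), if_neg h.ne, if_neg (by omega), assoc_eq]
    generalize (-1 : ℝ)^(m.natAbs) = e at *
    linear_combination (√2 * √((2 * ↑n + 1) / (4 * Real.pi) * (((n - m.natAbs).factorial:ℝ) / ((n + m.natAbs).factorial:ℝ))) * (1 / (2 ^ n * (n.factorial:ℝ))) *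
      (|Real.sin θ| ^ m.natAbs * Polynomial.eval (Real.cos θ) (pd n (n + m.natAbs))) * Real.sin ((m.natAbs:ℝ) * φ)) * hs
  · subst h
    simp [legP_eq]; ring
  · rw [if_neg h.ne', if_pos h, if_neg h.ne', if_pos h.le, assoc_eq]
    generalize (-1 : ℝ)^(m.natAbs) = e at *
    linear_combination (√2 * √((2 * ↑n + 1) / (4 * Real.pi) * (((n - m.natAbs).factorial:ℝ) / ((n + m.natAbs).factorial:ℝ))) * (1 / (2 ^ n * (n.factorial:ℝ))) *
      (|Real.sin θ| ^ m.natAbs * Polynomial.eval (Real.cos θ) (pd n (n + m.natAbs))) * Real.cos ((m.natAbs:ℝ) * φ)) * hs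

theorem tr_cont (m : ℤ) : Continuous (tr m) := by
  unfold tr; split_ifs <;> fun_prop

theorem tr_bd (m : ℤ) (φ : ℝ) : |tr m φ| ≤ 1 := by
  unfold tr; split_ifs
  · exact Real.abs_cos_le_one _
  · exact Real.abs_sin_le_one _

theorem Y_cont (n : ℕ) (m : ℤ) : Continuous (Function.uncurry (Ynm n m)) := by
  have : Function.uncurry (Ynm n m) = fun x : ℝ × ℝ =>
     NN n m * (|Real.sin x.1| ^ m.natAbs * (pd n (n + m.natAbs)).eval (Real.cos x.1)) * tr m x.2 := by
    ext x; exact Y_eq n m x.1 x.2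
  rw [this]
  have h1 := tr_cont m
  have h2 : Continuous (fun x : ℝ × ℝ => (pd n (n + m.natAbs)).eval (Real.cos x.1)) :=
    (pd n (n + m.natAbs)).continuous.comp (by fun_prop)
  fun_prop

theorem pd_bd (n m : ℕ) (hm : m ≤ n) (s : ℝ) (hs : |s| ≤ 1) :
    |(pd n (n + m)).eval s| ≤ 2 ^ n * ((2 * n).factorial / (n - m).factorial) := by
  have hd : ((2 * n).descFactorial (n + m) : ℝ) = (2 * n).factorial / (n - m).factorial := by
    have h := Nat.factorial_mul_descFactorial (n := 2 * n) (k := n + m) (by omega)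
    rw [show 2 * n - (n + m) = n - m by omega] at h
    rw [eq_div_iff (by positivity), mul_comm]
    exact_mod_cast h
  unfold pd
  have : ((Polynomial.X ^ 2 - 1) ^ n : Polynomial ℝ) = ∑ j ∈ Finset.range (n + 1),
      Polynomial.C ((-1) ^ (n - j) * (n.choose j : ℝ)) * Polynomial.X ^ (2 * j) := by
    rw [sub_eq_add_neg, add_pow]
    refine Finset.sum_congr rfl (fun j _ => ?_)
    simp [pow_mul]; ring
  rw [this, Polynomial.iterate_derivative_sum, Polynomial.eval_finset_sum, ← hd]
  refine (Finset.abs_sum_le_sum_abs _ _).trans ?_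
  have h2 : ((2:ℝ) ^ n) = ∑ j ∈ Finset.range (n + 1), (n.choose j : ℝ) := by
    exact_mod_cast (Nat.sum_range_choose n).symm
  rw [h2, Finset.sum_mul]
  refine Finset.sum_le_sum (fun j hj => ?_)
  rw [Polynomial.iterate_derivative_C_mul, Polynomial.iterate_derivative_X_pow_eq_C_mul]
  simp only [Polynomial.eval_mul, Polynomial.eval_C, Polynomial.eval_pow, Polynomial.eval_X, abs_mul, abs_pow, abs_neg, abs_one, one_pow, one_mul, Nat.abs_cast]
  have h3 : ((2 * j).descFactorial (n + m) : ℝ) ≤ (2 * n).descFactorial (n + m) := by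
    exact_mod_cast Nat.descFactorial_le _ (by have := Finset.mem_range.1 hj; omega)
  have h4 : |s| ^ (2 * j - (n + m)) ≤ 1 := pow_le_one₀ (abs_nonneg _) hs
  gcongr
  calc ((2 * j).descFactorial (n + m) : ℝ) * |s| ^ (2 * j - (n + m)) ≤ (2 * n).descFactorial (n + m) * 1 := by gcongr
    _ = _ := by simp

theorem NN_bd (n : ℕ) (m : ℤ) : (NN n m) ^ 2 ≤
    (2 * n + 1) * ((Nat.factorial (n - m.natAbs) : ℝ) / (Nat.factorial (n + m.natAbs) : ℝ)) * (1 / ((2:ℝ)^n * (Nat.factorial n : ℝ))) ^ 2 := by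
  unfold NN
  rw [mul_pow]
  gcongr
  have hp := Real.pi_gt_three
  have h0 : (2*(n:ℝ)+1)/(4*Real.pi) ≤ (2 * n + 1) / 12 := by
    gcongr; linarith
  split_ifs with h
  · subst h
    rw [Real.sq_sqrt (by positivity)]
    simp
    rw [div_self (by positivity), mul_one]
    have : (0:ℝ) ≤ n := by positivity
    linarith
  · rw [mul_pow, Real.sq_sqrt (by positivity), Real.sq_sqrt (by positivity), ← mul_assoc]
    gcongr
    have : (0:ℝ) ≤ n := by positivity
    linarith

theorem Y_bd (n : ℕ) (m : ℤ) (hm : m.natAbs ≤ n) (θ φ : ℝ) :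
    (Ynm n m θ φ) ^ 2 ≤ (2 * n + 1) * 16 ^ n := by
  rw [Y_eq]
  set M := m.natAbs
  have h1 := pd_bd n M hm (Real.cos θ) (Real.abs_cos_le_one θ)
  have h2 := NN_bd n m
  have h3 := tr_bd m φ
  have h4 : |Real.sin θ| ^ M ≤ 1 := pow_le_one₀ (abs_nonneg _) (Real.abs_sin_le_one θ)
  have h4' : (|Real.sin θ| ^ M) ^ 2 ≤ 1 := pow_le_one₀ (by positivity) h4
  have h3' : (tr m φ) ^ 2 ≤ 1 := by rw [← sq_abs]; exact pow_le_one₀ (by positivity) h3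
  have h1' : ((pd n (n + M)).eval (Real.cos θ)) ^ 2 ≤ (2 ^ n * ((2 * n).factorial / (n - M).factorial)) ^ 2 := by
    rw [← sq_abs]; gcongr
  have c1 : (2 * n).choose n ≤ 2 ^ (2 * n) := Nat.choose_le_two_pow _ _
  have c2 : (2 * n).choose (n + M) ≤ 2 ^ (2 * n) := Nat.choose_le_two_pow _ _
  have c1' : ((2 * n).choose n : ℝ) ≤ 2 ^ (2 * n) := by exact_mod_cast c1
  have c2' : ((2 * n).choose (n + M) : ℝ) ≤ 2 ^ (2 * n) := by exact_mod_cast c2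
  have e1 : ((2 * n).choose n : ℝ) = (2 * n).factorial / (n.factorial * n.factorial) := by
    rw [Nat.cast_choose ℝ (by omega)]; congr 4; omega
  have e2 : ((2 * n).choose (n + M) : ℝ) = (2 * n).factorial / ((n+M).factorial * (n-M).factorial) := by
    rw [Nat.cast_choose ℝ (by omega)]; congr 4; omega
  calc (NN n m * (|Real.sin θ| ^ M * (pd n (n + M)).eval (Real.cos θ)) * tr m φ) ^ 2
      = (NN n m) ^ 2 * ((|Real.sin θ| ^ M) ^ 2 * ((pd n (n + M)).eval (Real.cos θ)) ^ 2) * (tr m φ) ^ 2 := by ring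
    _ ≤ ((2 * n + 1) * ((Nat.factorial (n - M) : ℝ) / (Nat.factorial (n + M) : ℝ)) * (1 / ((2:ℝ)^n * (Nat.factorial n : ℝ))) ^ 2)
        * (1 * (2 ^ n * ((2 * n).factorial / (n - M).factorial)) ^ 2) * 1 := by gcongr
    _ = (2 * n + 1) * (((2 * n).choose n : ℝ) * ((2 * n).choose (n + M) : ℝ)) := by
        rw [e1, e2]
        field_simp
    _ ≤ (2 * n + 1) * ((2 ^ (2 * n)) * (2 ^ (2 * n))) := by gcongr
    _ = _ := by rw [← pow_add, show 2 * n + 2 * n = 4 * n by ring, pow_mul]; norm_num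
end

section

def PC (i : ℕ) (a : ℤ) : ℝ := ∫ φ in (0:ℝ)..(2*Real.pi), Real.cos (2 * φ) ^ i * Real.cos (a * φ)
def PS (i : ℕ) (a : ℤ) : ℝ := ∫ φ in (0:ℝ)..(2*Real.pi), Real.cos (2 * φ) ^ i * Real.sin (a * φ)

theorem PC_succ (i : ℕ) (a : ℤ) : PC (i+1) a = (PC i (a+2) + PC i (a-2)) / 2 := by
  unfold PC
  rw [← intervalIntegral.integral_add (by apply Continuous.intervalIntegrable; fun_prop) (by apply Continuous.intervalIntegrable; fun_prop),
    ← intervalIntegral.integral_div]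
  congr 1; ext φ
  push_cast
  rw [add_mul, sub_mul, Real.cos_add, Real.cos_sub]; ring

theorem PS_succ (i : ℕ) (a : ℤ) : PS (i+1) a = (PS i (a+2) + PS i (a-2)) / 2 := by
  unfold PS
  rw [← intervalIntegral.integral_add (by apply Continuous.intervalIntegrable; fun_prop) (by apply Continuous.intervalIntegrable; fun_prop),
    ← intervalIntegral.integral_div]
  congr 1; ext φ
  push_cast
  rw [add_mul, sub_mul, Real.sin_add, Real.sin_sub]; ring

theorem PC_zero (a : ℤ) (ha : a ≠ 0) : PC 0 a = 0 := by
  unfold PC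
  have ha' : (a:ℝ) ≠ 0 := by exact_mod_cast ha
  simp only [pow_zero, one_mul]
  rw [intervalIntegral.integral_comp_mul_left (fun x => Real.cos x) ha', integral_cos]
  have : Real.sin (a * (2 * Real.pi)) = 0 := by
    rw [Real.sin_eq_zero_iff]; exact ⟨2 * a, by push_cast; ring⟩
  simp [this]

theorem PS_zero (a : ℤ) : PS 0 a = 0 := by
  unfold PS
  by_cases ha : a = 0
  · simp [ha]
  have ha' : (a:ℝ) ≠ 0 := by exact_mod_cast ha
  simp only [pow_zero, one_mul]
  rw [intervalIntegral.integral_comp_mul_left (fun x => Real.sin x) ha', integral_sin]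
  have : Real.cos (a * (2 * Real.pi)) = 1 := by
    rw [Real.cos_eq_one_iff]; exact ⟨a, rfl⟩
  simp [this]

theorem PS_van (i : ℕ) (a : ℤ) : PS i a = 0 := by
  induction i generalizing a with
  | zero => exact PS_zero a
  | succ i ih => rw [PS_succ, ih, ih]; simp

theorem PC_van (i : ℕ) (a : ℤ) (h : Odd a ∨ 2 * (i:ℤ) < |a|) : PC i a = 0 := by
  induction i generalizing a with
  | zero =>
    apply PC_zero
    rintro rfl
    simp at h
  | succ i ih =>
    rw [PC_succ, ih, ih]
    · simp
    · rcases h with h | h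
      · left; exact h.sub_even (by decide)
      · right; push_cast at h; rcases abs_cases a with h1 | h1 <;> rcases abs_cases (a-2) with h2 | h2 <;> omega
    · rcases h with h | h
      · left; exact h.add_even (by decide)
      · right; push_cast at h; rcases abs_cases a with h1 | h1 <;> rcases abs_cases (a+2) with h2 | h2 <;> omega

def PH (i : ℕ) (m : ℤ) : ℝ := ∫ φ in (0:ℝ)..(2*Real.pi), Real.cos (2 * φ) ^ i * tr m φ

theorem PH_van (i : ℕ) (m : ℤ) (h : m < 0 ∨ Odd m ∨ 2 * (i:ℤ) < |m|) : PH i m = 0 := by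
  by_cases hm : 0 ≤ m
  · have : PH i m = PC i m.natAbs := by
      unfold PH PC tr; simp only [if_pos hm, Int.cast_natCast]
    rw [this, Int.natAbs_of_nonneg hm]
    apply PC_van
    rcases h with h | h
    · omega
    · exact h
  · have : PH i m = PS i m.natAbs := by
      unfold PH PS tr; simp only [if_neg hm, Int.cast_natCast]
    rw [this, PS_van]

theorem subst_cos (F : ℝ → ℝ) (hF : Continuous F) :
    ∫ θ in (0:ℝ)..Real.pi, F (Real.cos θ) * Real.sin θ = ∫ s in (-1:ℝ)..1, F s := by
  have := intervalIntegral.integral_comp_mul_deriv (a := 0) (b := Real.pi) (f := Real.cos) (f' := fun x => - Real.sin x) (g := F)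
    (fun x _ => Real.hasDerivAt_cos x) (by fun_prop) hF
  simp only [Function.comp, mul_neg, intervalIntegral.integral_neg, Real.cos_zero, Real.cos_pi] at this
  rw [intervalIntegral.integral_symm (-1) 1] at this; linarith

open Polynomial in
theorem dvd_van (P : ℝ[X]) (r a : ℕ) (h : (X ^ 2 - 1) ^ r ∣ P) (ha : a < r) :
    (derivative^[a] P).eval 1 = 0 ∧ (derivative^[a] P).eval (-1) = 0 := by
  have h1 := pow_sub_dvd_iterate_derivative_of_pow_dvd a h
  obtain ⟨c, hc⟩ := h1
  rw [hc]
  have : r - a ≠ 0 := by omega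
  simp [this]

open Polynomial in
theorem ibp (P W : ℝ[X]) (h1 : P.eval 1 * W.eval 1 = 0) (h2 : P.eval (-1) * W.eval (-1) = 0) :
    ∫ s in (-1:ℝ)..1, P.eval s * (derivative W).eval s = - ∫ s in (-1:ℝ)..1, (derivative P).eval s * W.eval s := by
  have := intervalIntegral.integral_mul_deriv_eq_deriv_mul (a := -1) (b := 1) (u := fun s => P.eval s) (v := fun s => W.eval s)
    (u' := fun s => (derivative P).eval s) (v' := fun s => (derivative W).eval s) (fun x _ => P.hasDerivAt x) (fun x _ => W.hasDerivAt x)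
    ((derivative P).continuous.intervalIntegrable _ _) ((derivative W).continuous.intervalIntegrable _ _)
  rw [this, h1, h2]; ring

open Polynomial in
theorem orth (P : ℝ[X]) (n M : ℕ) (hd : P.natDegree < n + M) (hP : (X ^ 2 - 1) ^ M ∣ P) :
    ∫ s in (-1:ℝ)..1, P.eval s * (pd n (n + M)).eval s = 0 := by
  have key : ∀ a, a ≤ n + M → ∫ s in (-1:ℝ)..1, P.eval s * (pd n (n + M)).eval s =
      (-1) ^ a * ∫ s in (-1:ℝ)..1, (derivative^[a] P).eval s * (pd n (n + M - a)).eval s := by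
    intro a ha
    induction a with
    | zero => simp
    | succ a ih =>
      rw [ih (by omega)]
      have e1 : pd n (n + M - a) = derivative (pd n (n + M - (a + 1))) := by
        have := pd_add n (n + M - (a + 1)) 1
        rw [Function.iterate_one] at this
        rw [this]; congr 1; omega
      have e2 : derivative^[a+1] P = derivative (derivative^[a] P) := Function.iterate_succ_apply' _ _ _
      have e3 : (derivative^[a] P).eval 1 * (pd n (n + M - (a + 1))).eval 1 = 0 ∧ (derivative^[a] P).eval (-1) * (pd n (n + M - (a + 1))).eval (-1) = 0 := by
        by_cases hM : a < M
        · have := dvd_van P M a hP hM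
          rw [this.1, this.2]; simp
        · have := dvd_van ((X ^ 2 - 1) ^ n) n (n + M - (a + 1)) dvd_rfl (by omega)
          unfold pd
          rw [this.1, this.2]; simp
      rw [e1, e2, ibp _ _ e3.1 e3.2]; ring
  rw [key (n + M) le_rfl, iterate_derivative_eq_zero hd]
  simp

def TH (i k n M : ℕ) : ℝ := ∫ θ in (0:ℝ)..Real.pi,
  (Real.sin θ ^ (2 * i + M) * Real.cos θ ^ k * (pd n (n + M)).eval (Real.cos θ)) * Real.sin θ

theorem TH_eq (i k n j : ℕ) : TH i k n (2 * j) = ∫ s in (-1:ℝ)..1, (1 - s ^ 2) ^ (i + j) * s ^ k * (pd n (n + 2 * j)).eval s := by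
  rw [← subst_cos (fun s => (1 - s ^ 2) ^ (i + j) * s ^ k * (pd n (n + 2 * j)).eval s) (by
    have := (pd n (n + 2 * j)).continuous
    fun_prop)]
  unfold TH
  congr 1; ext θ
  rw [← Real.sin_sq, ← pow_mul, mul_add]

open Polynomial in
theorem TH_van (i k n j : ℕ) (hj : j ≤ i) (hd : 2 * i + k < n) : TH i k n (2 * j) = 0 := by
  rw [TH_eq, ← orth ((1 - X ^ 2) ^ (i + j) * X ^ k) n (2 * j)]
  · simp
  · have : (1 - X ^ 2 : ℝ[X]).natDegree ≤ 2 := by compute_degree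
    have h2 : ((1 - X ^ 2 : ℝ[X]) ^ (i + j)).natDegree ≤ (i + j) * 2 := natDegree_pow_le_of_le _ this
    have h3 := natDegree_mul_le (p := (1 - X ^ 2 : ℝ[X]) ^ (i + j)) (q := X ^ k)
    rw [natDegree_X_pow] at h3
    omega
  · apply Dvd.dvd.mul_right
    have : (X ^ 2 - 1 : ℝ[X]) ∣ 1 - X ^ 2 := ⟨-1, by ring⟩
    exact (pow_dvd_pow _ (by omega)).trans (pow_dvd_pow_of_dvd this _)

theorem sInner_congr (u u' v v' : SphereFun) (h : ∀ θ ∈ Set.Icc (0:ℝ) Real.pi, ∀ φ, u θ φ * v θ φ = u' θ φ * v' θ φ) :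
    sInner u v = sInner u' v' := by
  unfold sInner
  apply intervalIntegral.integral_congr
  intro φ _
  apply intervalIntegral.integral_congr
  intro θ hθ
  rw [Set.uIcc_of_le Real.pi_pos.le] at hθ
  simp only []
  rw [h θ hθ φ]

theorem coeff_mn (p : Ix) (n : ℕ) (m : ℤ) : coeff (mn p) n m =
    NN n m / rho ^ dg p * PH p.1.1 m * TH p.1.1 p.1.2 n m.natAbs := by
  have : coeff (mn p) n m = ∫ φ in (0:ℝ)..(2*Real.pi), ∫ θ in (0:ℝ)..Real.pi,
     (NN n m / rho ^ dg p * (Real.cos (2 * φ) ^ p.1.1 * tr m φ)) *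
      ((Real.sin θ ^ (2 * p.1.1 + m.natAbs) * Real.cos θ ^ p.1.2 * (pd n (n + m.natAbs)).eval (Real.cos θ)) * Real.sin θ) := by
    unfold coeff sInner
    apply intervalIntegral.integral_congr
    intro φ _
    apply intervalIntegral.integral_congr
    intro θ hθ
    rw [Set.uIcc_of_le Real.pi_pos.le] at hθ
    simp only []
    rw [Y_eq, abs_of_nonneg (Real.sin_nonneg_of_mem_Icc hθ)]
    unfold mn QQ
    rw [mul_pow, pow_add, pow_mul]; ring
  rw [this]
  simp only [intervalIntegral.integral_const_mul, intervalIntegral.integral_mul_const]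
  rfl

theorem coeff_mn_van (p : Ix) (n : ℕ) (m : ℤ) (h : dg p < n) : coeff (mn p) n m = 0 := by
  rw [coeff_mn]
  by_cases h1 : m < 0 ∨ Odd m ∨ 2 * (p.1.1:ℤ) < |m|
  · rw [PH_van _ _ h1]; simp
  · simp only [not_or, not_lt, Int.not_odd_iff_even] at h1
    obtain ⟨h1, ⟨j, hj⟩, h3⟩ := h1
    have : m.natAbs = 2 * j.natAbs := by omega
    rw [this, TH_van _ _ _ _ (by rw [abs_of_nonneg h1] at h3; omega) h]; simp
end

section

theorem inner_cont (u v : SphereFun) (hu : Continuous (Function.uncurry u)) (hv : Continuous (Function.uncurry v)) :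
    Continuous (fun φ => ∫ θ in (0:ℝ)..Real.pi, u θ φ * v θ φ * Real.sin θ) := by
  apply intervalIntegral.continuous_parametric_intervalIntegral_of_continuous'
  have h1 : Continuous (fun x : ℝ × ℝ => u x.2 x.1) := hu.comp (continuous_snd.prodMk continuous_fst)
  have h2 : Continuous (fun x : ℝ × ℝ => v x.2 x.1) := hv.comp (continuous_snd.prodMk continuous_fst)
  exact (h1.mul h2).mul (by fun_prop)

theorem inner_int (u v : SphereFun) (hu : Continuous (Function.uncurry u)) (hv : Continuous (Function.uncurry v)) (φ : ℝ) :
    IntervalIntegrable (fun θ => u θ φ * v θ φ * Real.sin θ) volume 0 Real.pi := by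
  apply Continuous.intervalIntegrable
  have h1 : Continuous (fun x : ℝ => u x φ) := hu.comp (continuous_id.prodMk continuous_const)
  have h2 : Continuous (fun x : ℝ => v x φ) := hv.comp (continuous_id.prodMk continuous_const)
  exact (h1.mul h2).mul (by fun_prop)

theorem sInner_add (u u' v : SphereFun) (hu : Continuous (Function.uncurry u)) (hu' : Continuous (Function.uncurry u')) (hv : Continuous (Function.uncurry v)) :
    sInner (fun θ φ => u θ φ + u' θ φ) v = sInner u v + sInner u' v := by
  unfold sInner
  rw [← intervalIntegral.integral_add ((inner_cont u v hu hv).intervalIntegrable _ _) ((inner_cont u' v hu' hv).intervalIntegrable _ _)]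
  congr 1; ext φ
  rw [← intervalIntegral.integral_add (inner_int u v hu hv φ) (inner_int u' v hu' hv φ)]
  congr 1; ext θ; ring

theorem sInner_smul (c : ℝ) (u v : SphereFun) :
    sInner (fun θ φ => c * u θ φ) v = c * sInner u v := by
  unfold sInner
  rw [← intervalIntegral.integral_const_mul]
  congr 1; ext φ
  rw [← intervalIntegral.integral_const_mul]
  congr 1; ext θ; ring

theorem sInner_bd (u v : SphereFun) (C : ℝ) (h : ∀ θ φ, |u θ φ * v θ φ| ≤ C) : |sInner u v| ≤ 20 * C := by
  have hC : 0 ≤ C := (abs_nonneg _).trans (h 0 0)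
  have hp := Real.pi_lt_d2
  have hp0 := Real.pi_pos
  have h1 : ∀ φ, ‖∫ θ in (0:ℝ)..Real.pi, u θ φ * v θ φ * Real.sin θ‖ ≤ C * |Real.pi - 0| := by
    intro φ
    apply intervalIntegral.norm_integral_le_of_norm_le_const
    intro θ _
    rw [Real.norm_eq_abs, abs_mul]
    calc _ ≤ C * 1 := by gcongr; exact h θ φ; exact Real.abs_sin_le_one θ
      _ = _ := by ring
  have h2 := intervalIntegral.norm_integral_le_of_norm_le_const (a := 0) (b := 2 * Real.pi) (f := fun φ => ∫ θ in (0:ℝ)..Real.pi, u θ φ * v θ φ * Real.sin θ)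
    (C := C * |Real.pi - 0|) (fun φ _ => h1 φ)
  rw [Real.norm_eq_abs, sub_zero, sub_zero, abs_of_pos hp0, abs_of_pos (show 0 < 2 * Real.pi by positivity)] at h2
  change |sInner u v| ≤ _ at h2
  refine h2.trans ?_
  have : Real.pi * (2 * Real.pi) ≤ 20 := by nlinarith
  nlinarith

theorem eL_norm (θ φ : ℝ) (f : EE) : |eL θ φ f| ≤ ‖f‖ := by
  have := l1_bound (eL θ φ) 1 (fun p => by
    have := mn_bd1 p θ φ
    rw [← eL_bs] at this; exact this) f
  simpa using this

theorem Y_bd' (n : ℕ) (m : ℤ) : ∃ C, 0 ≤ C ∧ ∀ θ φ, |Ynm n m θ φ| ≤ C := by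
  obtain ⟨C, hC⟩ := isCompact_Icc.exists_bound_of_continuousOn (s := Set.Icc (-1:ℝ) 1) (f := fun s => (pd n (n + m.natAbs)).eval s)
    (pd n (n + m.natAbs)).continuous.continuousOn
  have hC0 : 0 ≤ C := (norm_nonneg _).trans (hC 0 (by simp))
  refine ⟨|NN n m| * (1 * C) * 1, by positivity, fun θ φ => ?_⟩
  rw [Y_eq, abs_mul, abs_mul, abs_mul]
  have h1 := hC (Real.cos θ) (Real.cos_mem_Icc θ)
  rw [Real.norm_eq_abs] at h1
  have h2 := tr_bd m φ
  have h3 : |(|Real.sin θ| ^ m.natAbs)| ≤ 1 := by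
    rw [abs_pow, abs_abs]
    exact pow_le_one₀ (abs_nonneg _) (Real.abs_sin_le_one θ)
  gcongr

theorem exists_coeffL (n : ℕ) (m : ℤ) : ∃ L : EE →L[ℝ] ℝ, ∀ f, L f = coeff (ev f) n m := by
  obtain ⟨C, hC0, hC⟩ := Y_bd' n m
  refine ⟨LinearMap.mkContinuous { toFun := fun f => coeff (ev f) n m, map_add' := fun f g => ?_, map_smul' := fun c f => ?_ } (20 * C) (fun f => ?_), fun f => rfl⟩
  · unfold coeff
    rw [← sInner_add _ _ _ (ev_cont f) (ev_cont g) (Y_cont n m)]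
    congr 1; ext θ φ; simp [ev]
  · unfold coeff
    simp only [RingHom.id_apply, smul_eq_mul]
    rw [← sInner_smul]
    congr 1; ext θ φ; simp [ev]
  · simp only [LinearMap.coe_mk, AddHom.coe_mk, Real.norm_eq_abs]
    rw [mul_assoc]
    apply sInner_bd
    intro θ φ
    rw [abs_mul, mul_comm]
    exact mul_le_mul (hC θ φ) (eL_norm θ φ f) (abs_nonneg _) hC0

def coeffL (n : ℕ) (m : ℤ) : EE →L[ℝ] ℝ := (exists_coeffL n m).choose
theorem coeffL_eq (n : ℕ) (m : ℤ) (f : EE) : coeffL n m f = coeff (ev f) n m := (exists_coeffL n m).choose_spec f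

theorem ev_bs (p : Ix) : ev (bs p) = mn p := by ext θ φ; exact eL_bs p θ φ

theorem coeffL_bs (n : ℕ) (m : ℤ) (p : Ix) : coeffL n m (bs p) = coeff (mn p) n m := by
  rw [coeffL_eq, ev_bs]

theorem coeffL_bd (n : ℕ) (m : ℤ) (hm : m.natAbs ≤ n) (f : EE) :
    |coeffL n m f| ≤ 20 * (1 / rho ^ n * Real.sqrt ((2 * n + 1) * 16 ^ n)) * ‖f‖ := by
  refine l1_bound (coeffL n m) _ ?_ f
  intro p
  change ‖coeffL n m (bs p)‖ ≤ _
  rw [coeffL_bs, Real.norm_eq_abs]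
  have hr := rho_pos n
  by_cases h : dg p < n
  · rw [coeff_mn_van p n m h, abs_zero]; positivity
  apply sInner_bd
  intro θ φ
  rw [abs_mul]
  have h1 := mn_bd p θ φ
  have h2 : |Ynm n m θ φ| ≤ Real.sqrt ((2 * n + 1) * 16 ^ n) := by
    apply Real.abs_le_sqrt; exact Y_bd n m hm θ φ
  have h3 : 1 / rho ^ dg p ≤ 1 / rho ^ n := by
    apply one_div_le_one_div_of_le hr
    exact pow_le_pow_right₀ (by unfold rho; norm_num) (by omega)
  gcongr
  exact h1.trans h3

theorem num_bd (n : ℕ) : ((n:ℝ) + 1) ^ 4 * (2 * n + 1) ≤ 2 * 32 ^ n := by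
  rcases n with _ | n
  · norm_num
  induction n with
  | zero => norm_num
  | succ n ih =>
    push_cast at ih ⊢
    have h : ((n:ℝ) + 1 + 1 + 1) ^ 4 * (2 * (n + 1 + 1) + 1) ≤ 32 * (((n:ℝ) + 1 + 1) ^ 4 * (2 * (n + 1) + 1)) := by
      have e1 : (n:ℝ) + 1 + 1 + 1 ≤ 3/2 * (n + 1 + 1) := by linarith [Nat.cast_nonneg (α := ℝ) n]
      have e2 : 2 * ((n:ℝ) + 1 + 1) + 1 ≤ 2 * (2 * (n + 1) + 1) := by linarith [Nat.cast_nonneg (α := ℝ) n]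
      calc _ ≤ (3/2 * ((n:ℝ) + 1 + 1)) ^ 4 * (2 * (2 * (n + 1) + 1)) := by gcongr
        _ = 81 / 8 * (((n:ℝ) + 1 + 1) ^ 4 * (2 * (n + 1) + 1)) := by ring
        _ ≤ _ := by gcongr; norm_num
    rw [pow_succ 32 (n+1)]; linarith

theorem term_bd (n : ℕ) (m : ℤ) (hm : m.natAbs ≤ n) (f : EE) :
    (muSp n)^2 * Real.exp (2*(1/2)*Real.sqrt (muSp n)) * (coeff (ev f) n m)^2 ≤
      2400 * ‖f‖ ^ 2 * ((1/2) ^ n * (1/2) ^ m.natAbs) := by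
  rw [← coeffL_eq]
  have hr := rho_pos n
  have hc := coeffL_bd n m hm f
  have hc2 : (coeffL n m f) ^ 2 ≤ (20 * (1 / rho ^ n * Real.sqrt ((2 * n + 1) * 16 ^ n)) * ‖f‖) ^ 2 := by
    rw [← sq_abs]; gcongr
  have h4 : (1 / rho ^ n) ^ 2 = (1 / 10000) ^ n := by
    rw [← one_div_pow, ← pow_mul, mul_comm, pow_mul]; unfold rho; norm_num
  have hc3 : (20 * (1 / rho ^ n * Real.sqrt ((2 * n + 1) * 16 ^ n)) * ‖f‖) ^ 2 = 400 * ((1/10000) ^ n * ((2 * n + 1) * 16 ^ n)) * ‖f‖ ^ 2 := by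
    rw [mul_pow, mul_pow, mul_pow, Real.sq_sqrt (by positivity), h4]; ring
  rw [hc3] at hc2
  have hmu0 : 0 ≤ muSp n := by unfold muSp; positivity
  have hmu : muSp n ≤ (n + 1) ^ 2 := by unfold muSp; nlinarith [Nat.cast_nonneg (α := ℝ) n]
  have hsq : Real.sqrt (muSp n) ≤ n + 1 := (Real.sqrt_le_left (by positivity)).2 hmu
  have he : Real.exp (2*(1/2)*Real.sqrt (muSp n)) ≤ 3 ^ (n + 1) := by
    calc _ ≤ Real.exp ((n + 1 : ℕ) * 1) := by
          apply Real.exp_le_exp.2; push_cast; linarith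
      _ = Real.exp 1 ^ (n + 1) := by rw [Real.exp_nat_mul]
      _ ≤ _ := by gcongr; linarith [Real.exp_one_lt_d9]
  have hh : ((1:ℝ)/2) ^ n ≤ (1/2) ^ m.natAbs := pow_le_pow_of_le_one (by norm_num) (by norm_num) hm
  calc _ ≤ ((n + 1) ^ 2) ^ 2 * 3 ^ (n+1) * (400 * ((1/10000) ^ n * ((2 * n + 1) * 16 ^ n)) * ‖f‖ ^ 2) := by gcongr
    _ = (((n:ℝ) + 1) ^ 4 * (2 * n + 1)) * (1200 * ‖f‖ ^ 2 * (48 / 10000) ^ n) := by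
        rw [show (48/10000 : ℝ) = 3 * (1/10000) * 16 by norm_num, mul_pow, mul_pow]; ring
    _ ≤ (2 * 32 ^ n) * (1200 * ‖f‖ ^ 2 * (48 / 10000) ^ n) := by
        apply mul_le_mul_of_nonneg_right (num_bd n) (by positivity)
    _ = 2400 * ‖f‖ ^ 2 * (32 * (48 / 10000)) ^ n := by rw [mul_pow]; ring
    _ ≤ 2400 * ‖f‖ ^ 2 * (1/2 * (1/2)) ^ n := by
        have : (32 * (48 / 10000) : ℝ) ≤ 1/2 * (1/2) := by norm_num
        exact mul_le_mul_of_nonneg_left (pow_le_pow_left₀ (by norm_num) this n) (by positivity)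
    _ = 2400 * ‖f‖ ^ 2 * ((1/2) ^ n * (1/2) ^ n) := by rw [mul_pow]
    _ ≤ _ := by gcongr

theorem gev_sum : Summable (fun p : ℕ × ℤ => ((1:ℝ)/2) ^ p.1 * (1/2) ^ p.2.natAbs) := by
  apply Summable.mul_of_nonneg (f := fun n : ℕ => ((1:ℝ)/2) ^ n) (g := fun m : ℤ => ((1:ℝ)/2) ^ m.natAbs)
  · exact summable_geometric_of_lt_one (by norm_num) (by norm_num)
  · apply Summable.of_nat_of_neg <;> simpa using summable_geometric_two
  · intro n; positivity
  · intro n; positivity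

theorem gev_bd : ∃ C : ℝ, 0 ≤ C ∧ ∀ f : EE, gevNormSq (1/2) (ev f) ≤ ENNReal.ofReal (C * ‖f‖ ^ 2) := by
  refine ⟨2400 * ∑' p : ℕ × ℤ, ((1:ℝ)/2) ^ p.1 * (1/2) ^ p.2.natAbs, by positivity, fun f => ?_⟩
  rw [mul_assoc, mul_comm (∑' p : ℕ × ℤ, ((1:ℝ)/2) ^ p.1 * (1/2) ^ p.2.natAbs), ← mul_assoc, ← tsum_mul_left,
    ENNReal.ofReal_tsum_of_nonneg (fun p => by positivity) (gev_sum.mul_left _)]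
  apply ENNReal.tsum_le_tsum
  intro p
  split_ifs with h
  · apply ENNReal.ofReal_le_ofReal
    exact term_bd p.1 p.2 (by have := h.2; rw [Int.abs_eq_natAbs] at this; exact_mod_cast this) f
  · exact zero_le
end

section

def qq : EE := bs iq
def zz : EE := rho • bs iz
def ell : EE →L[ℝ] ℝ := coeffL 4 2
def i12 : Ix := ⟨(1, 2), by decide⟩
def i03 : Ix := ⟨(0, 3), by decide⟩

theorem KK_qq : KK qq = qq := by
  have h := KK_T iq
  have h1 : LL iq = 0 := by simp [LL, iq]
  have h2 : dd iq = 1 := by simp [dd]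
  rw [h1, h2, one_smul, add_zero] at h
  exact h

theorem bt_eq (p : Ix) : bt p.1.1 p.1.2 = bs p := by
  unfold bt; rw [dif_pos p.2]

theorem iz_ne : iz ≠ iq := by decide
theorem i12_ne : i12 ≠ iq := by decide
theorem i03_ne : i03 ≠ iq := by decide

theorem KK_iz : KK (bs iz) = (1/4 : ℝ) • bs iz := by
  have h := KK_T iz
  have h1 : LL iz = 0 := by simp [LL, iz]
  have h2 : dd iz = 4 := by rw [dd, if_neg iz_ne]; simp [dg, iz]; norm_num
  rw [h1, h2, add_zero, map_smul] at h
  rw [eq_comm, ← h, smul_smul, h]; norm_num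

theorem KK_zz : KK zz = (1/4 : ℝ) • zz := by
  unfold zz
  rw [map_smul, KK_iz, smul_comm]

theorem PiQ_qq : PiQ qq = 1 := by simp [qq, PiQ_bs]
theorem PiQ_zz : PiQ zz = 0 := by simp [zz, PiQ_bs, iz_ne]

theorem ell_iz : ell (bs iz) = 0 := by
  unfold ell; rw [coeffL_bs, coeff_mn_van _ _ _ (by decide)]
theorem ell_iq : ell (bs iq) = 0 := by
  unfold ell; rw [coeffL_bs, coeff_mn_van _ _ _ (by decide)]
theorem ell_i03 : ell (bs i03) = 0 := by
  unfold ell; rw [coeffL_bs, coeff_mn_van _ _ _ (by decide)]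

theorem ellK_i03 : ell (KK (bs i03)) = 0 := by
  have h := congrArg ell (KK_T i03)
  have h1 : LL i03 = (6 / rho ^ 2) • bs iz := by
    have := bt_eq iz
    simp only [iz] at this
    simp [LL, i03, this, iz]; norm_num
  have h2 : dd i03 = -6 := by rw [dd, if_neg i03_ne]; simp [dg, i03]; norm_num
  rw [h1, h2, map_add, map_add, map_smul, map_smul, map_smul, map_smul, KK_iz, map_smul, ell_iz, ell_i03] at h
  simpa using h

theorem pd46 (s : ℝ) : (pd 4 6).eval s = 20160 * s ^ 2 - 2880 := by
  unfold pd
  have : ((Polynomial.X ^ 2 - 1) ^ 4 : Polynomial ℝ) = Polynomial.X ^ 8 - Polynomial.C 4 * Polynomial.X ^ 6 + Polynomial.C 6 * Polynomial.X ^ 4 - Polynomial.C 4 * Polynomial.X ^ 2 + 1 := by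
    rw [show (Polynomial.C 4 : Polynomial ℝ) = 4 from map_ofNat _ _, show (Polynomial.C 6 : Polynomial ℝ) = 6 from map_ofNat _ _]
    ring
  rw [this]
  simp only [iterate_map_add, iterate_map_sub, Polynomial.iterate_derivative_C_mul,
    Polynomial.iterate_derivative_X_pow_eq_C_mul]
  rw [← Polynomial.C_1, Polynomial.iterate_derivative_C (by norm_num)]
  simp [Nat.descFactorial]
  ring

theorem TH_val : TH 1 2 4 2 ≠ 0 := by
  have h := TH_eq 1 2 4 1
  simp only [mul_one] at h
  rw [h]
  simp only [show 4 + 2 = 6 from rfl, show 1 + 1 = 2 from rfl, pd46]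
  have : ∀ s : ℝ, (1 - s ^ 2) ^ 2 * s ^ 2 * (20160 * s ^ 2 - 2880) = 20160 * s ^ 8 - 43200 * s ^ 6 + 25920 * s ^ 4 - 2880 * s ^ 2 := by
    intro s; ring
  simp only [this]
  rw [intervalIntegral.integral_sub, intervalIntegral.integral_add, intervalIntegral.integral_sub]
  · simp only [intervalIntegral.integral_const_mul, integral_pow]
    norm_num
  all_goals apply Continuous.intervalIntegrable; fun_prop

theorem PH_val : PH 1 2 ≠ 0 := by
  have : PH 1 2 = PC 1 2 := by
    unfold PH PC tr; simp
  rw [this, PC_succ, PC_zero _ (by norm_num)]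
  unfold PC
  simp [Real.pi_ne_zero]

theorem NN_val : NN 4 2 ≠ 0 := by
  unfold NN
  have := Real.pi_pos
  rw [if_neg (by norm_num)]
  positivity

theorem ell_i12 : ell (bs i12) ≠ 0 := by
  unfold ell; rw [coeffL_bs, coeff_mn]
  have h := rho_pos (dg i12)
  exact mul_ne_zero (mul_ne_zero (div_ne_zero NN_val h.ne') PH_val) TH_val

theorem ellK_i12 : ell (KK (bs i12)) ≠ 0 := by
  have h := congrArg ell (KK_T i12)
  have h1 : LL i12 = (2 / rho ^ 2) • bs iq := by
    have := bt_eq iq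
    simp only [iq] at this
    simp [LL, i12, this, iq]; norm_num
  have h2 : dd i12 = -14 := by rw [dd, if_neg i12_ne]; simp [dg, i12]; norm_num
  have h3 := KK_qq
  unfold qq at h3
  rw [h1, h2, map_add, map_add, map_smul, map_smul, map_smul, map_smul, h3, ell_iq] at h
  intro h0
  rw [h0] at h
  simp at h
  exact ell_i12 h.symm

def psi0 (a : ℝ) : EE := zz + a • qq

theorem ell_psi0 (a : ℝ) : ell (psi0 a) = 0 := by
  simp [psi0, zz, qq, ell_iz, ell_iq]

theorem ell_K_psi0 (a : ℝ) : ell (KK (psi0 a)) = 0 := by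
  unfold psi0
  rw [map_add, map_smul, KK_zz, KK_qq]
  simp [zz, qq, ell_iz, ell_iq]

theorem ell_cubic : ∃ a0 > 0, ∀ a : ℝ, 0 < a → a ≤ a0 → ell (KK (MM (psi0 a) (psi0 a) (psi0 a))) ≠ 0 := by
  set κ := ell (KK (bs i12)) with hκ
  have hk : κ ≠ 0 := ellK_i12
  set c2 := ell (KK (MM zz qq qq)) + ell (KK (MM qq zz qq)) + ell (KK (MM qq qq zz))
  set c3 := ell (KK (MM qq qq qq))
  have e0 : ell (KK (MM zz zz zz)) = 0 := by
    have : MM zz zz zz = rho ^ 3 • bs i03 := by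
      simp only [zz, map_smul, smul_apply, MM_bs, smul_smul]
      congr 1; ring
    rw [this, map_smul, map_smul, ellK_i03, smul_zero]
  have e1 : ell (KK (MM zz zz qq)) = rho ^ 2 * κ := by
    have : MM zz zz qq = rho ^ 2 • bs i12 := by
      simp only [zz, qq, map_smul, smul_apply, MM_bs, smul_smul]
      congr 1; ring
    rw [this, map_smul, map_smul, smul_eq_mul]
  have e2 : ell (KK (MM zz qq zz)) = rho ^ 2 * κ := by
    have : MM zz qq zz = rho ^ 2 • bs i12 := by
      simp only [zz, qq, map_smul, smul_apply, MM_bs, smul_smul]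
      congr 1; ring
    rw [this, map_smul, map_smul, smul_eq_mul]
  have e3 : ell (KK (MM qq zz zz)) = rho ^ 2 * κ := by
    have : MM qq zz zz = rho ^ 2 • bs i12 := by
      simp only [zz, qq, map_smul, smul_apply, MM_bs, smul_smul]
      congr 1; ring
    rw [this, map_smul, map_smul, smul_eq_mul]
  have main : ∀ a, ell (KK (MM (psi0 a) (psi0 a) (psi0 a))) = a * (3 * rho ^ 2 * κ + a * c2 + a ^ 2 * c3) := by
    intro a
    simp only [psi0, map_add, map_smul, add_apply, smul_apply, smul_add, smul_eq_mul, e0, e1, e2, e3, c2, c3]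
    ring
  have hr : rho ≠ 0 := by unfold rho; norm_num
  have hcont : Filter.Tendsto (fun a : ℝ => 3 * rho ^ 2 * κ + a * c2 + a ^ 2 * c3) (nhds 0) (nhds (3 * rho ^ 2 * κ)) := by
    have : Continuous (fun a : ℝ => 3 * rho ^ 2 * κ + a * c2 + a ^ 2 * c3) := by fun_prop
    simpa using this.tendsto 0
  have hev := hcont.eventually_ne (show 3 * rho ^ 2 * κ ≠ 0 by positivity)
  obtain ⟨δ, hδ, h⟩ := Metric.eventually_nhds_iff.1 hev
  refine ⟨δ / 2, by positivity, fun a ha ha' => ?_⟩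
  rw [main]
  refine mul_ne_zero ha.ne' (h ?_)
  simp only [Real.dist_eq, sub_zero, abs_of_pos ha]; linarith
end

section

abbrev XX : Type := ℝ × EE × ℝ

def f1 (w k : EE) : XX →L[ℝ] XX :=
  (ContinuousLinearMap.fst ℝ ℝ (EE × ℝ)).prod
   (((ContinuousLinearMap.fst ℝ EE ℝ).comp (ContinuousLinearMap.snd ℝ ℝ (EE × ℝ))
      - ((ContinuousLinearMap.snd ℝ EE ℝ).comp (ContinuousLinearMap.snd ℝ ℝ (EE × ℝ))).smulRight w
      - (ContinuousLinearMap.fst ℝ ℝ (EE × ℝ)).smulRight k).prod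
    (PiQ.comp ((ContinuousLinearMap.fst ℝ EE ℝ).comp (ContinuousLinearMap.snd ℝ ℝ (EE × ℝ)))))

theorem f1_apply (w k : EE) (x : XX) : f1 w k x = (x.1, x.2.1 - x.2.2 • w - x.1 • k, PiQ x.2.1) := rfl

def dal (a : ℝ) (k : EE) : XX →L[ℝ] ℝ := a⁻¹ • (((ContinuousLinearMap.snd ℝ EE ℝ).comp (ContinuousLinearMap.snd ℝ ℝ (EE × ℝ)))
  - PiQ.comp ((ContinuousLinearMap.fst ℝ EE ℝ).comp (ContinuousLinearMap.snd ℝ ℝ (EE × ℝ)))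
  - (PiQ k) • (ContinuousLinearMap.fst ℝ ℝ (EE × ℝ)))

theorem dal_apply (a : ℝ) (k : EE) (x : XX) : dal a k x = a⁻¹ * (x.2.2 - PiQ x.2.1 - PiQ k * x.1) := rfl

def f2 (a : ℝ) (w k : EE) : XX →L[ℝ] XX :=
  (ContinuousLinearMap.fst ℝ ℝ (EE × ℝ)).prod
   (((ContinuousLinearMap.fst ℝ EE ℝ).comp (ContinuousLinearMap.snd ℝ ℝ (EE × ℝ))
      + (dal a k).smulRight w
      + (ContinuousLinearMap.fst ℝ ℝ (EE × ℝ)).smulRight k).prod (dal a k))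

theorem f2_apply (a : ℝ) (w k : EE) (x : XX) : f2 a w k x = (x.1, x.2.1 + dal a k x • w + x.1 • k, dal a k x) := rfl

def feq (a : ℝ) (ha : a ≠ 0) (w k : EE) (hw : PiQ w = a) : XX ≃L[ℝ] XX :=
  ContinuousLinearEquiv.equivOfInverse (f1 w k) (f2 a w k)
    (by
      rintro ⟨b, r, s⟩
      have : dal a k (f1 w k (b, r, s)) = s := by
        simp only [dal_apply, f1_apply, map_sub, map_smul, hw, smul_eq_mul]
        field_simp; ring
      rw [f2_apply, this, f1_apply]
      simp only [Prod.mk.injEq, true_and, and_true]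
      abel)
    (by
      rintro ⟨b, r, s⟩
      rw [f1_apply, f2_apply]
      simp only [map_add, map_smul, hw, smul_eq_mul, dal_apply, Prod.mk.injEq, true_and]
      constructor
      · abel
      · field_simp; ring)

def cub (ψ : EE) : EE := MM ψ ψ ψ

theorem cub_smooth : ContDiff ℝ 1 cub := by
  unfold cub
  have h1 : ContDiff ℝ 1 (fun ψ : EE => MM ψ) := by
    exact ContinuousLinearMap.contDiff (𝕜 := ℝ) (E := EE) (F := EE →L[ℝ] EE →L[ℝ] EE) (n := 1) MM
  exact (h1.clm_apply contDiff_id).clm_apply contDiff_id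

def FF (a : ℝ) (x : XX) : XX := (x.1, x.2.1 - KK (x.2.2 • x.2.1 + x.1 • cub x.2.1 + (a • qq + (4:ℝ) • zz)), PiQ x.2.1 - a)

theorem FF_deriv (a : ℝ) : HasStrictFDerivAt (FF a) (f1 (KK (psi0 a)) (KK (cub (psi0 a)))) (0, psi0 a, 0) := by
  have hc : HasStrictFDerivAt cub (fderiv ℝ cub (psi0 a)) (psi0 a) := cub_smooth.contDiffAt.hasStrictFDerivAt (by norm_num)
  have hβ : HasStrictFDerivAt (fun x : XX => x.1) (ContinuousLinearMap.fst ℝ ℝ (EE × ℝ)) (0, psi0 a, 0) := hasStrictFDerivAt_fst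
  have hψ : HasStrictFDerivAt (fun x : XX => x.2.1) ((ContinuousLinearMap.fst ℝ EE ℝ).comp (ContinuousLinearMap.snd ℝ ℝ (EE × ℝ))) (0, psi0 a, 0) :=
    ((ContinuousLinearMap.fst ℝ EE ℝ).comp (ContinuousLinearMap.snd ℝ ℝ (EE × ℝ))).hasStrictFDerivAt
  have hα : HasStrictFDerivAt (fun x : XX => x.2.2) ((ContinuousLinearMap.snd ℝ EE ℝ).comp (ContinuousLinearMap.snd ℝ ℝ (EE × ℝ))) (0, psi0 a, 0) :=
    ((ContinuousLinearMap.snd ℝ EE ℝ).comp (ContinuousLinearMap.snd ℝ ℝ (EE × ℝ))).hasStrictFDerivAt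
  have hcub : HasStrictFDerivAt (fun x : XX => cub x.2.1) _ (0, psi0 a, 0) := HasStrictFDerivAt.comp (0, psi0 a, 0) (g := cub) hc hψ
  have h1 := ((hα.fun_smul hψ).fun_add (hβ.fun_smul hcub)).fun_add (hasStrictFDerivAt_const (a • qq + (4:ℝ) • zz) ((0, psi0 a, 0) : XX))
  have h2 := HasStrictFDerivAt.comp (0, psi0 a, 0) (g := KK) KK.hasStrictFDerivAt h1
  have h3 := HasStrictFDerivAt.comp (0, psi0 a, 0) (g := PiQ) PiQ.hasStrictFDerivAt hψ
  have h4 := hβ.prodMk ((hψ.fun_sub h2).prodMk (h3.sub_const a))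
  refine HasStrictFDerivAt.congr_fderiv h4 (ContinuousLinearMap.ext fun x => ?_)
  rw [f1_apply]
  refine Prod.ext rfl (Prod.ext (Eq.symm ?_) rfl)
  change x.2.1 - x.2.2 • KK (psi0 a) - x.1 • KK (cub (psi0 a)) = x.2.1 - KK ((0:ℝ) • x.2.1 + x.2.2 • psi0 a + ((0:ℝ) • (fderiv ℝ cub (psi0 a) x.2.1) + x.1 • cub (psi0 a)) + 0)
  simp only [zero_smul, zero_add, add_zero, map_add, map_smul]
  abel

theorem ift (a : ℝ) (ha : 0 < a) (hk : ell (KK (MM (psi0 a) (psi0 a) (psi0 a))) ≠ 0) :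
    ∃ (ψ : EE) (α β : ℝ), ψ = KK (α • ψ + β • MM ψ ψ ψ + (a • qq + (4:ℝ) • zz)) ∧ PiQ ψ = a ∧ ‖ψ - psi0 a‖ ≤ a ∧ ell ψ ≠ 0 := by
  have hw : PiQ (KK (psi0 a)) = a := by
    unfold psi0
    rw [map_add, map_smul, KK_zz, KK_qq, map_add, map_smul, map_smul, PiQ_zz, PiQ_qq]; simp
  have h0 : FF a (0, psi0 a, 0) = (0, 0, 0) := by
    unfold FF
    simp only [zero_smul, zero_add, map_add, map_smul, KK_zz, KK_qq, psi0, PiQ_zz, PiQ_qq]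
    refine Prod.ext rfl (Prod.ext ?_ ?_)
    · change zz + a • qq - (a • qq + (4:ℝ) • (1/4:ℝ) • zz) = 0
      rw [smul_smul, show (4:ℝ) * (1/4) = 1 by norm_num, one_smul, add_comm, sub_self]
    · simp
  let e := feq a ha.ne' (KK (psi0 a)) (KK (cub (psi0 a))) hw
  have hF : HasStrictFDerivAt (FF a) (e : XX →L[ℝ] XX) (0, psi0 a, 0) := FF_deriv a
  let G := hF.localInverse (FF a) e (0, psi0 a, 0)
  have hG : HasStrictFDerivAt G (e.symm : XX →L[ℝ] XX) (0, 0, 0) := by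
    have := hF.to_localInverse
    rwa [h0] at this
  have hG0 : G (0, 0, 0) = (0, psi0 a, 0) := by
    have := hF.localInverse_apply_image
    rwa [h0] at this
  have hR : ∀ᶠ y in nhds ((0, 0, 0) : XX), FF a (G y) = y := by
    have := hF.eventually_right_inverse
    rwa [h0] at this
  have hcurve : HasDerivAt (fun β : ℝ => ((β, 0, 0) : XX)) (1, 0, 0) 0 :=
    (hasDerivAt_id (0:ℝ)).prodMk (hasDerivAt_const (0:ℝ) ((0, 0) : EE × ℝ))
  have hc : HasDerivAt (fun β : ℝ => G (β, 0, 0)) (e.symm (1, 0, 0)) 0 :=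
    HasFDerivAt.comp_hasDerivAt (0:ℝ) (l := G) (f := fun β : ℝ => ((β, 0, 0) : XX)) hG.hasFDerivAt hcurve
  have he : e.symm (1, 0, 0) = f2 a (KK (psi0 a)) (KK (cub (psi0 a))) (1, 0, 0) := rfl
  let P : XX →L[ℝ] ℝ := ell.comp ((ContinuousLinearMap.fst ℝ EE ℝ).comp (ContinuousLinearMap.snd ℝ ℝ (EE × ℝ)))
  have hl : HasDerivAt (fun β : ℝ => P (G (β, 0, 0))) (P (e.symm (1, 0, 0))) 0 :=
    P.hasFDerivAt.comp_hasDerivAt (0:ℝ) hc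
  have hl' : P (e.symm (1, 0, 0)) ≠ 0 := by
    rw [he, f2_apply]
    change ell ((0:EE) + dal a (KK (cub (psi0 a))) (1, 0, 0) • KK (psi0 a) + (1:ℝ) • KK (cub (psi0 a))) ≠ 0
    simp only [zero_add, one_smul, map_add, map_smul, ell_K_psi0, smul_zero]
    exact hk
  have hne : ∀ᶠ β in nhdsWithin (0:ℝ) {0}ᶜ, P (G (β, 0, 0)) ≠ 0 := hl.eventually_ne hl'
  have hct : Filter.Tendsto (fun β : ℝ => ((β, 0, 0) : XX)) (nhds 0) (nhds (0, 0, 0)) := hcurve.continuousAt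
  have hR' : ∀ᶠ β in nhds (0:ℝ), FF a (G (β, 0, 0)) = (β, 0, 0) := hct.eventually hR
  have hnorm : ∀ᶠ β in nhds (0:ℝ), ‖(G (β, 0, 0)).2.1 - psi0 a‖ < a := by
    have h1 : ContinuousAt (fun β : ℝ => ‖(G (β, 0, 0)).2.1 - psi0 a‖) 0 := by
      have h2 : ContinuousAt (fun β : ℝ => (G (β, 0, 0)).2.1) 0 := hc.continuousAt.snd.fst
      exact (h2.sub continuousAt_const).norm
    apply h1.eventually_lt continuousAt_const
    rw [hG0]; simpa using ha
  obtain ⟨β, hb1, hb2, hb3⟩ := (hne.and ((hR'.filter_mono nhdsWithin_le_nhds).and (hnorm.filter_mono nhdsWithin_le_nhds))).exists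
  refine ⟨(G (β, 0, 0)).2.1, (G (β, 0, 0)).2.2, β, ?_, ?_, hb3.le, hb1⟩
  · have e1 := congrArg (fun x : XX => x.1) hb2
    have e2 := congrArg (fun x : XX => x.2.1) hb2
    simp only [FF] at e1 e2
    rw [e1] at e2
    exact sub_eq_zero.1 e2
  · have e2 := congrArg (fun x : XX => x.2.2) hb2
    exact sub_eq_zero.1 e2
end

section

theorem sInner_sep (A B : ℝ → ℝ) (n : ℕ) (m : ℤ) : sInner (fun θ φ => A θ * B φ) (Ynm n m) =
    (∫ φ in (0:ℝ)..(2*Real.pi), B φ * tr m φ) * (∫ θ in (0:ℝ)..Real.pi,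
      A θ * (NN n m * (|Real.sin θ| ^ m.natAbs * (pd n (n + m.natAbs)).eval (Real.cos θ))) * Real.sin θ) := by
  have : sInner (fun θ φ => A θ * B φ) (Ynm n m) = ∫ φ in (0:ℝ)..(2*Real.pi), ∫ θ in (0:ℝ)..Real.pi,
      (B φ * tr m φ) * (A θ * (NN n m * (|Real.sin θ| ^ m.natAbs * (pd n (n + m.natAbs)).eval (Real.cos θ))) * Real.sin θ) := by
    unfold sInner
    congr 1; ext φ; congr 1; ext θ
    rw [Y_eq]; ring
  rw [this]
  simp only [intervalIntegral.integral_const_mul, intervalIntegral.integral_mul_const]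

theorem tr_two (φ : ℝ) : tr 2 φ = Real.cos (2 * φ) := by
  simp [tr]

theorem zonal_orth (A : ℝ → ℝ) : sInner (fun θ _ => A θ) (Ynm 4 2) = 0 := by
  have h := sInner_sep A (fun _ => 1) 4 2
  simp only [mul_one] at h
  rw [h]
  have : (∫ φ in (0:ℝ)..(2*Real.pi), 1 * tr 2 φ) = PH 0 2 := by simp [PH]
  rw [this, PH_van 0 2 (by norm_num), zero_mul]

theorem pd24 (s : ℝ) : (pd 2 4).eval s = 24 := by
  unfold pd
  have : ((Polynomial.X ^ 2 - 1) ^ 2 : Polynomial ℝ) = Polynomial.X ^ 4 - Polynomial.C 2 * Polynomial.X ^ 2 + 1 := by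
    rw [show (Polynomial.C 2 : Polynomial ℝ) = 2 from map_ofNat _ _]
    ring
  rw [this]
  simp only [iterate_map_add, iterate_map_sub, Polynomial.iterate_derivative_C_mul,
    Polynomial.iterate_derivative_X_pow_eq_C_mul]
  rw [← Polynomial.C_1, Polynomial.iterate_derivative_C (by norm_num)]
  simp [Nat.descFactorial]
  try norm_num

theorem Y2_orth (m : ℤ) (hm : m ∈ Finset.Icc (-2 : ℤ) 2) : sInner (Ynm 2 m) (Ynm 4 2) = 0 := by
  by_cases h2 : m = 2
  · subst h2
    have h1 : sInner (Ynm 2 2) (Ynm 4 2) = sInner (fun θ φ => (NN 2 2 * 24 * rho ^ dg iq) * mn iq θ φ) (Ynm 4 2) := by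
      congr 1; ext θ φ
      rw [Y_eq]
      have hr := (rho_pos (dg iq)).ne'
      simp only [show (2:ℤ).natAbs = 2 from rfl, show 2 + 2 = 4 from rfl, pd24, tr_two, sq_abs]
      unfold mn QQ
      field_simp
      simp [iq]; ring
    have h3 := coeff_mn_van iq 4 2 (by decide)
    unfold coeff at h3
    rw [h1, sInner_smul, h3, mul_zero]
  · have h1 : sInner (Ynm 2 m) (Ynm 4 2) = sInner (fun θ φ => (NN 2 m * (|Real.sin θ| ^ m.natAbs * (pd 2 (2 + m.natAbs)).eval (Real.cos θ))) * tr m φ) (Ynm 4 2) := by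
      congr 1; ext θ φ; rw [Y_eq]
    rw [h1, sInner_sep (fun θ => NN 2 m * (|Real.sin θ| ^ m.natAbs * (pd 2 (2 + m.natAbs)).eval (Real.cos θ))) (tr m)]
    have h3 : (∫ φ in (0:ℝ)..(2*Real.pi), tr m φ * tr 2 φ) = PH 1 m := by
      unfold PH; congr 1; ext φ; rw [tr_two, pow_one, mul_comm]
    rw [h3]
    have h4 : PH 1 m = 0 := by
      simp only [Finset.mem_Icc] at hm
      by_cases h0 : m = 0
      · subst h0
        have : PH 1 0 = PH 0 2 := by
          unfold PH; congr 1; ext φ; simp [tr]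
        rw [this, PH_van 0 2 (by norm_num)]
      by_cases h5 : m = 1
      · subst h5; exact PH_van _ _ (Or.inr (Or.inl (by decide)))
      · exact PH_van _ _ (Or.inl (by omega))
    rw [h4, zero_mul]

theorem sInner_sum (s : Finset ℤ) (c : ℤ → ℝ) (hs : ∀ m ∈ s, sInner (Ynm 2 m) (Ynm 4 2) = 0) :
    Continuous (Function.uncurry (fun θ φ => ∑ m ∈ s, c m * Ynm 2 m θ φ)) ∧ sInner (fun θ φ => ∑ m ∈ s, c m * Ynm 2 m θ φ) (Ynm 4 2) = 0 := by
  have hc : ∀ s : Finset ℤ, Continuous (Function.uncurry (fun θ φ => ∑ m ∈ s, c m * Ynm 2 m θ φ)) := by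
    intro s
    have : Function.uncurry (fun θ φ => ∑ m ∈ s, c m * Ynm 2 m θ φ) = fun x : ℝ × ℝ => ∑ m ∈ s, c m * Function.uncurry (Ynm 2 m) x := rfl
    rw [this]
    exact continuous_finsetSum _ (fun m _ => continuous_const.mul (Y_cont 2 m))
  refine ⟨hc s, ?_⟩
  induction s using Finset.induction_on with
  | empty => simp [sInner]
  | insert m s hm ih =>
    have h1 := ih (fun m' hm' => hs m' (Finset.mem_insert_of_mem hm'))
    have hcm : Continuous (Function.uncurry (fun θ φ => c m * Ynm 2 m θ φ)) := continuous_const.mul (Y_cont 2 m)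
    have h2 := sInner_add (fun θ φ => c m * Ynm 2 m θ φ) (fun θ φ => ∑ m ∈ s, c m * Ynm 2 m θ φ) (Ynm 4 2) hcm (hc s) (Y_cont 4 2)
    rw [h1, sInner_smul, hs m (Finset.mem_insert_self _ _)] at h2
    simp only [Finset.sum_insert hm]
    rw [h2]; simp

theorem nontriv (u : SphereFun) (hu : Continuous (Function.uncurry u)) (hc : coeff u 4 2 ≠ 0) : SphNontrivial u := by
  rintro ⟨z, c, hz, h⟩
  apply hc
  obtain ⟨hs1, hs2⟩ := sInner_sum (Finset.Icc (-2) 2) c Y2_orth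
  let A : ℝ → ℝ := fun θ => u θ 0 - ∑ m ∈ Finset.Icc (-2 : ℤ) 2, c m * Ynm 2 m θ 0
  have hA : Continuous (Function.uncurry (fun (θ _ : ℝ) => A θ)) := by
    have h1 : Continuous (fun x : ℝ × ℝ => u x.1 0) := hu.comp (continuous_fst.prodMk continuous_const)
    have h2 : Continuous (fun x : ℝ × ℝ => ∑ m ∈ Finset.Icc (-2 : ℤ) 2, c m * Ynm 2 m x.1 0) := hs1.comp (continuous_fst.prodMk continuous_const)
    exact h1.sub h2
  have h1 : coeff u 4 2 = sInner (fun θ φ => A θ + ∑ m ∈ Finset.Icc (-2 : ℤ) 2, c m * Ynm 2 m θ φ) (Ynm 4 2) := by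
    apply sInner_congr
    intro θ hθ φ
    have e1 := h θ hθ φ
    have e2 := h θ hθ 0
    have e3 := hz θ φ 0
    simp only [A]
    rw [e1, e2, e3]; ring
  rw [h1, sInner_add (fun θ _ => A θ) _ _ hA hs1 (Y_cont 4 2), hs2, zonal_orth, add_zero]

theorem nonzon (u : SphereFun) (h : SphNontrivial u) : ¬ ZonalOn u := by
  intro hz
  refine h ⟨fun θ _ => u θ 0, fun _ => 0, fun _ _ _ => rfl, fun θ hθ φ => ?_⟩
  simpa using hz θ hθ φ 0

def c10 : ℝ := Real.sqrt ((2*((1:ℕ):ℝ)+1)/(4*Real.pi))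

theorem c10_pos : 0 < c10 := by
  have := Real.pi_pos
  unfold c10; positivity

theorem Y10 (θ φ : ℝ) : Ynm 1 0 θ φ = c10 * Real.cos θ := by
  unfold Ynm
  rw [if_pos rfl, legP_eq]
  unfold c10 pd
  simp
  left
  ring

theorem eL_zz (θ φ : ℝ) : eL θ φ zz = Real.cos θ := by
  unfold zz
  rw [map_smul, eL_bs]
  simp [mn, iz, dg, rho]
  ring

theorem steady (γ a α β : ℝ) (ψ : EE) (h : ψ = KK (α • ψ + β • MM ψ ψ ψ + (a • qq + (4:ℝ) • zz))) (ha : PiQ ψ = a)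
    (θ : ℝ) (hθ : θ ∈ Set.Ioo (0:ℝ) Real.pi) (φ : ℝ) :
    advect (ev ((γ * c10) • ψ)) (fun t p => lapS (ev ((γ * c10) • ψ)) t p - 4*γ*Ynm 1 0 t p) θ φ = 0 := by
  set κ := γ * c10 with hκ
  have key : ∀ t ∈ Set.Ioo (0:ℝ) Real.pi, ∀ p, lapS (ev (κ • ψ)) t p - 4*γ*Ynm 1 0 t p = κ * ((α - 6) * eL t p ψ + β * (eL t p ψ) ^ 3) := by
    intro t ht p
    have hs : Real.sin t ≠ 0 := (Real.sin_pos_of_mem_Ioo ht).ne'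
    have h1 := lapL_KK (α • ψ + β • MM ψ ψ ψ + (a • qq + (4:ℝ) • zz)) t p hs
    rw [← h, ha] at h1
    simp only [map_add, map_smul, smul_eq_mul, eL_MM, eL_zz, qq] at h1
    rw [lapS_ev', Y10, map_smul, smul_eq_mul]
    rw [show 4 * γ * (c10 * Real.cos t) = κ * (4 * Real.cos t) by rw [hκ]; ring]
    linear_combination κ * h1
  have d1 : dPhi (fun t p => lapS (ev (κ • ψ)) t p - 4*γ*Ynm 1 0 t p) θ φ = κ * ((α - 6) + 3 * β * (eL θ φ ψ) ^ 2) * eP θ φ ψ := by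
    unfold dPhi
    have : (fun p => lapS (ev (κ • ψ)) θ p - 4*γ*Ynm 1 0 θ p) = fun p => κ * ((α - 6) * eL θ p ψ + β * (eL θ p ψ) ^ 3) := by
      ext p; exact key θ hθ p
    rw [this]
    have hd := eL_P ψ θ φ
    have := (((hd.const_mul (α - 6)).add ((hd.pow 3).const_mul β)).const_mul κ).deriv
    refine this.trans ?_
    push_cast; ring
  have d2 : dTheta (fun t p => lapS (ev (κ • ψ)) t p - 4*γ*Ynm 1 0 t p) θ φ = κ * ((α - 6) + 3 * β * (eL θ φ ψ) ^ 2) * eT θ φ ψ := by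
    unfold dTheta
    have : (fun t => lapS (ev (κ • ψ)) t φ - 4*γ*Ynm 1 0 t φ) =ᶠ[nhds θ] fun t => κ * ((α - 6) * eL t φ ψ + β * (eL t φ ψ) ^ 3) := by
      filter_upwards [isOpen_Ioo.mem_nhds hθ] with t ht
      exact key t ht φ
    rw [this.deriv_eq]
    have hd := eL_T ψ θ φ
    have := (((hd.const_mul (α - 6)).add ((hd.pow 3).const_mul β)).const_mul κ).deriv
    refine this.trans ?_
    push_cast; ring
  unfold advect
  rw [d1, d2, dPhi_ev, dTheta_ev, map_smul, map_smul, smul_eq_mul, smul_eq_mul]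
  ring

theorem main_thm (γ : ℝ) (hγ : γ ≠ 0) :
    ∃ (lam M ε₀ : ℝ), 0 < lam ∧ 0 < M ∧ 0 < ε₀ ∧
      ∀ ε : ℝ, 0 < ε → ε ≤ ε₀ →
        ∃ Ψ : SphereFun,
          SphSmooth Ψ ∧ PeriodicPhi Ψ ∧ RealAnalyticSphere Ψ ∧
          (∀ θ ∈ Set.Ioo (0:ℝ) Real.pi, ∀ φ : ℝ,
            advect Ψ (fun t p => lapS Ψ t p - 4*γ*Ynm 1 0 t p) θ φ = 0) ∧
          gevNormSq lam (fun θ φ => γ*Ynm 1 0 θ φ - Ψ θ φ)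
            ≤ ENNReal.ofReal ((M*ε)^2) ∧
          coeff Ψ 4 2 ≠ 0 ∧
          ¬ ZonalOn Ψ ∧ SphNontrivial Ψ := by
  obtain ⟨C, hC0, hC⟩ := gev_bd
  obtain ⟨a0, ha0, hcub⟩ := ell_cubic
  refine ⟨1/2, 2 * |γ * c10| * Real.sqrt C + 1, a0, by norm_num, by positivity, ha0, fun ε hε hε' => ?_⟩
  obtain ⟨ψ, α, β, h1, h2, h3, h4⟩ := ift ε hε (hcub ε hε hε')
  have hco : coeff (ev ((γ * c10) • ψ)) 4 2 ≠ 0 := by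
    rw [← coeffL_eq, map_smul, smul_eq_mul]
    exact mul_ne_zero (mul_ne_zero hγ c10_pos.ne') h4
  have hnt := nontriv _ (ev_cont _) hco
  refine ⟨ev ((γ * c10) • ψ), ev_smooth _, ev_periodic _, ⟨1/2, by norm_num, (hC _).trans_lt ENNReal.ofReal_lt_top⟩,
    fun θ hθ φ => steady γ ε α β ψ h1 h2 θ hθ φ, ?_, hco, nonzon _ hnt, hnt⟩
  have e1 : (fun θ φ => γ*Ynm 1 0 θ φ - ev ((γ * c10) • ψ) θ φ) = ev ((γ * c10) • (zz - ψ)) := by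
    ext θ φ
    simp only [ev, map_smul, map_sub, eL_zz, Y10, smul_eq_mul]; ring
  rw [e1]
  refine (hC _).trans (ENNReal.ofReal_le_ofReal ?_)
  have e2 : ‖zz - ψ‖ ≤ 2 * ε := by
    have : zz - ψ = -(ψ - psi0 ε) - ε • qq := by unfold psi0; abel
    rw [this]
    refine (norm_sub_le _ _).trans ?_
    rw [norm_neg, norm_smul, qq, bs_norm, Real.norm_eq_abs, abs_of_pos hε]; linarith
  rw [norm_smul, Real.norm_eq_abs]
  calc C * (|γ * c10| * ‖zz - ψ‖) ^ 2 ≤ C * (|γ * c10| * (2 * ε)) ^ 2 := by gcongr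
    _ = (2 * |γ * c10| * Real.sqrt C * ε) ^ 2 := by
        rw [mul_pow (2 * |γ * c10| * Real.sqrt C), mul_pow (2 * |γ * c10|), Real.sq_sqrt hC0]; ring
    _ ≤ _ := by gcongr; linarith
end

/-- For `γ ≠ 0` there exist real-analytic non-zonal, non-trivial
steady solutions of the Euler equations on the `γ`-rotating sphere arbitrarily
close (in Gevrey norm) to the rigid rotation stream function `γY₁⁰`. -/
theorem nonzonal_steady_near_rigid_rotation (γ : ℝ) (hγ : γ ≠ 0) :
    ∃ (lam M ε₀ : ℝ), 0 < lam ∧ 0 < M ∧ 0 < ε₀ ∧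
      ∀ ε : ℝ, 0 < ε → ε ≤ ε₀ →
        ∃ Ψ : SphereFun,
          SphSmooth Ψ ∧ PeriodicPhi Ψ ∧ RealAnalyticSphere Ψ ∧
          -- steady Euler on the γ-rotating sphere: ∇⊥Ψ·∇(ΔΨ − 4γY₁⁰) = 0
          (∀ θ ∈ Set.Ioo (0:ℝ) Real.pi, ∀ φ : ℝ,
            advect Ψ (fun t p => lapS Ψ t p - 4*γ*Ynm 1 0 t p) θ φ = 0) ∧
          gevNormSq lam (fun θ φ => γ*Ynm 1 0 θ φ - Ψ θ φ)
            ≤ ENNReal.ofReal ((M*ε)^2) ∧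
          coeff Ψ 4 2 ≠ 0 ∧
          ¬ ZonalOn Ψ ∧ SphNontrivial Ψ := by
  exact main_thm γ hγ
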